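/- There exists a sequence of integers d(1), d(2), d(3), … such that for every real number q with 0 < q < 1, the series ∑_{n=1}^∞ n·d(n)·q^n converges absolutely and 2q · E(q^2)^8 E(q^5)^3 / E(q)^7 = ∑_{n=1}^∞ n·d(n)·q^n; in particular d(1) = 2, d(2) = 7, d(3) = 18, d(4) = 42. -/

import Mathlib

open Real

/-- Euler's product `E(q) = ∏_{j=1}^∞ (1 - q^j)`. -/
noncomputable def eulerE (q : ℝ) : ℝ := ∏' j : ℕ, (1 - q ^ (j + 1))

/-!
Write `E_k = E(q ^ k)`, let `r` be the Rogers–Ramanujan continued fraction and let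
`k = r(q) r(q²)²` be Ramanujan's parameter of level ten. Then `q d/dq` of
`G = (2k + k²) / (1 - 4k - k²)` is `2 q E₂⁸ E₅³ / E₁⁷`, so that the coefficients of `G` are the
required `d n`. They are integers because `k = a / b` for power series `a, b` with integer
coefficients such that `b² - 4ab - a²` has constant term `1`.

The derivative of `r` is given by the Wronskian of the theta series
`∑ (-1) ^ n q ^ ((5 n² ± n) / 2)` and `∑ (-1) ^ n q ^ ((5 n² ± 3 n) / 2)`. It appears when the
double series `∑ (2 (j - 2 i) + 1)² (-1) ^ (i + j) q ^ (i (i - 1) / 2 + j (j - 1) / 2)` is split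
over the cosets of the sublattice of `ℤ × ℤ` spanned by `(1, 2)` and `(-2, 1)`, and Jacobi's
identity for `E³` evaluates the same double series as `-16 E₁⁶`. The remaining relations of level
ten between the `E_k` come from similar dissections and from the Weierstrass three-term relation
for theta functions.
-/

open Filter Topology

section QPochhammer

variable {R : Type*} [CommRing R]

/-- The finite `q`-Pochhammer symbol `(a; q)_n`. -/
def qPochhammer (a q : R) (n : ℕ) : R := ∏ j ∈ Finset.range n, (1 - a * q ^ j)

theorem qPochhammer_zero (a q : R) : qPochhammer a q 0 = 1 :=
  Finset.prod_range_zero _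

theorem qPochhammer_succ (a q : R) (n : ℕ) :
    qPochhammer a q (n + 1) = qPochhammer a q n * (1 - a * q ^ n) :=
  Finset.prod_range_succ _ _

theorem qPochhammer_succ' (a q : R) (n : ℕ) :
    qPochhammer a q (n + 1) = (1 - a) * qPochhammer (a * q) q n := by
  rw [qPochhammer, Finset.prod_range_succ', pow_zero, mul_one, mul_comm]
  simp only [qPochhammer, pow_succ', mul_assoc]

theorem qPochhammer_add (a q : R) (m n : ℕ) :
    qPochhammer a q (m + n) = qPochhammer a q m * qPochhammer (a * q ^ m) q n := by
  simp only [qPochhammer, Finset.prod_range_add, pow_add, mul_assoc]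

theorem qPochhammer_mul (a q : R) (m n : ℕ) :
    qPochhammer a q (m * n) = ∏ i ∈ Finset.range m, qPochhammer (a * q ^ i) (q ^ m) n := by
  induction n with
  | zero => simp [qPochhammer_zero]
  | succ n ih =>
    simp only [qPochhammer_succ, Finset.prod_mul_distrib, ← ih]
    rw [Nat.mul_succ, qPochhammer_add]
    simp only [qPochhammer, pow_mul, mul_right_comm a]

variable {𝕜 : Type*} [NormedField 𝕜] {q : 𝕜}

/-- The infinite `q`-Pochhammer symbol `(a; q)_∞`. -/
noncomputable def qPochhammerInf (a q : 𝕜) : 𝕜 := ∏' j : ℕ, (1 - a * q ^ j)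

theorem one_sub_mul_pow_ne_zero (hq : ‖q‖ < 1) {a : 𝕜} (ha : ‖a‖ < 1) (j : ℕ) :
    1 - a * q ^ j ≠ 0 := by
  have h : ‖a * q ^ j‖ < 1 := by
    rw [norm_mul, norm_pow]
    exact mul_lt_one_of_nonneg_of_lt_one_left (norm_nonneg _) ha
      (pow_le_one₀ (norm_nonneg _) hq.le)
  refine sub_ne_zero.mpr fun h1 => ?_
  rw [← h1, norm_one] at h
  exact lt_irrefl _ h

theorem qPochhammer_self_ne_zero (hq : ‖q‖ < 1) (n : ℕ) : qPochhammer q q n ≠ 0 :=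
  Finset.prod_ne_zero_iff.mpr fun j _ => one_sub_mul_pow_ne_zero hq hq j

theorem summable_norm_neg_mul_pow (hq : ‖q‖ < 1) (a : 𝕜) :
    Summable fun j : ℕ => ‖-(a * q ^ j)‖ := by
  simpa only [norm_neg, norm_mul, norm_pow] using
    (summable_geometric_of_lt_one (norm_nonneg q) hq).mul_left ‖a‖

variable [CompleteSpace 𝕜]

theorem tendsto_qPochhammer (hq : ‖q‖ < 1) (a : 𝕜) :
    Tendsto (qPochhammer a q) atTop (𝓝 (qPochhammerInf a q)) := by
  have h := multipliable_one_add_of_summable (summable_norm_neg_mul_pow hq a)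
  simp only [← sub_eq_add_neg] at h
  exact h.hasProd.tendsto_prod_nat

theorem qPochhammerInf_ne_zero (hq : ‖q‖ < 1) {a : 𝕜} (ha : ‖a‖ < 1) :
    qPochhammerInf a q ≠ 0 := by
  have h := tprod_one_add_ne_zero_of_summable
    (fun j => by simpa only [← sub_eq_add_neg] using one_sub_mul_pow_ne_zero hq ha j)
    (summable_norm_neg_mul_pow hq a)
  simpa only [qPochhammerInf, sub_eq_add_neg] using h

theorem qPochhammerInf_eq_prod (hq : ‖q‖ < 1) (a : 𝕜) {m : ℕ} (hm : 0 < m) :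
    qPochhammerInf a q = ∏ i ∈ Finset.range m, qPochhammerInf (a * q ^ i) (q ^ m) := by
  have hqm : ‖q ^ m‖ < 1 := by
    rw [norm_pow]
    exact pow_lt_one₀ (norm_nonneg q) hq hm.ne'
  refine tendsto_nhds_unique ((tendsto_qPochhammer hq a).comp (tendsto_id.const_mul_atTop' hm)) ?_
  refine (tendsto_finsetProd _ fun i _ => tendsto_qPochhammer hqm (a * q ^ i)).congr fun n => ?_
  exact (qPochhammer_mul a q m n).symm

end QPochhammer

section TriangularNumber

/-- The triangular number `n (n - 1) / 2`, at an arbitrary integer `n`. -/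
def tri (n : ℤ) : ℤ := n * (n - 1) / 2

theorem two_mul_tri (n : ℤ) : 2 * tri n = n * (n - 1) :=
  Int.mul_ediv_cancel' (Int.even_mul_pred_self n).two_dvd

theorem tri_add (m n : ℤ) : tri (m + n) = tri m + tri n + m * n := by
  linarith [two_mul_tri (m + n), two_mul_tri m, two_mul_tri n]

theorem tri_mul (m n : ℤ) : tri (m * n) = m ^ 2 * tri n + tri m * n := by
  linarith [two_mul_tri (m * n), congr(m ^ 2 * $(two_mul_tri n)), congr($(two_mul_tri m) * n)]

theorem tri_neg (n : ℤ) : tri (-n) = tri n + n := by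
  linarith [two_mul_tri (-n), two_mul_tri n]

end TriangularNumber

section Theta

variable {𝕜 : Type*} [NormedField 𝕜] {Q z : 𝕜}

/-- The general term `Q ^ (n (n - 1) / 2) * z ^ n` of the theta series. -/
def thetaTerm (Q z : 𝕜) (n : ℤ) : 𝕜 := Q ^ tri n * z ^ n

/-- The theta function `∑ Q ^ (n (n - 1) / 2) * z ^ n` over all integers `n`. -/
noncomputable def theta (Q z : 𝕜) : 𝕜 := ∑' n : ℤ, thetaTerm Q z n

theorem thetaTerm_zero (Q z : 𝕜) : thetaTerm Q z 0 = 1 := by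
  simp [thetaTerm, tri]

theorem thetaTerm_one (Q z : 𝕜) : thetaTerm Q z 1 = z := by
  simp [thetaTerm, tri]

theorem thetaTerm_add (hQ : Q ≠ 0) (hz : z ≠ 0) (m n : ℤ) :
    thetaTerm Q z (m + n) = thetaTerm Q z m * thetaTerm Q (z * Q ^ m) n := by
  simp only [thetaTerm, tri_add, mul_zpow, zpow_add₀ hQ, zpow_add₀ hz, zpow_mul]
  ring

theorem thetaTerm_succ (hQ : Q ≠ 0) (hz : z ≠ 0) (n : ℤ) :
    thetaTerm Q z (n + 1) = thetaTerm Q z n * (z * Q ^ n) := by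
  rw [thetaTerm_add hQ hz, thetaTerm_one]

theorem thetaTerm_neg (hQ : Q ≠ 0) (n : ℤ) :
    thetaTerm Q z (-n) = thetaTerm Q (Q / z) n := by
  simp only [thetaTerm, tri_neg, zpow_add₀ hQ, zpow_neg, div_zpow]
  rw [mul_assoc, div_eq_mul_inv]

theorem summable_pow_mul_norm_thetaTerm_natCast (k : ℕ) (hQ : Q ≠ 0) (hQ1 : ‖Q‖ < 1)
    (hz : z ≠ 0) : Summable fun n : ℕ => (n : ℝ) ^ k * ‖thetaTerm Q z n‖ := by
  have hratio : Tendsto (fun n : ℕ => 2 ^ k * ‖z‖ * ‖Q‖ ^ n) atTop (𝓝 0) := by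
    simpa using (tendsto_pow_atTop_nhds_zero_of_lt_one (norm_nonneg Q) hQ1).const_mul (2 ^ k * ‖z‖)
  refine summable_of_ratio_norm_eventually_le one_half_lt_one ?_
  filter_upwards [hratio.eventually_le_const one_half_pos, eventually_ge_atTop 1] with n hn hn1
  have hsucc : ((n + 1 : ℕ) : ℝ) ^ k ≤ 2 ^ k * (n : ℝ) ^ k := by
    rw [← mul_pow]
    gcongr
    exact_mod_cast (by omega : n + 1 ≤ 2 * n)
  have hterm : ‖thetaTerm Q z (n + 1 : ℕ)‖ = ‖thetaTerm Q z n‖ * (‖z‖ * ‖Q‖ ^ n) := by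
    rw [Nat.cast_succ, thetaTerm_succ hQ hz, norm_mul, norm_mul, zpow_natCast, norm_pow]
  rw [norm_of_nonneg (by positivity), norm_of_nonneg (by positivity), hterm]
  calc ((n + 1 : ℕ) : ℝ) ^ k * (‖thetaTerm Q z n‖ * (‖z‖ * ‖Q‖ ^ n))
      ≤ 2 ^ k * (n : ℝ) ^ k * (‖thetaTerm Q z n‖ * (‖z‖ * ‖Q‖ ^ n)) := by gcongr
    _ = 2 ^ k * ‖z‖ * ‖Q‖ ^ n * ((n : ℝ) ^ k * ‖thetaTerm Q z n‖) := by ring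
    _ ≤ 1 / 2 * ((n : ℝ) ^ k * ‖thetaTerm Q z n‖) := by gcongr

theorem summable_abs_pow_mul_norm_thetaTerm (k : ℕ) (hQ : Q ≠ 0) (hQ1 : ‖Q‖ < 1) (hz : z ≠ 0) :
    Summable fun n : ℤ => |(n : ℝ)| ^ k * ‖thetaTerm Q z n‖ := by
  refine Summable.of_nat_of_neg ?_ ?_
  · simpa using summable_pow_mul_norm_thetaTerm_natCast k hQ hQ1 hz
  · simpa [thetaTerm_neg hQ] using
      summable_pow_mul_norm_thetaTerm_natCast k hQ hQ1 (div_ne_zero hQ hz)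

theorem summable_norm_thetaTerm (hQ : Q ≠ 0) (hQ1 : ‖Q‖ < 1) (hz : z ≠ 0) :
    Summable fun n : ℤ => ‖thetaTerm Q z n‖ := by
  simpa using summable_abs_pow_mul_norm_thetaTerm 0 hQ hQ1 hz

theorem norm_intCast_le_abs (n : ℤ) : ‖(n : 𝕜)‖ ≤ |(n : ℝ)| := by
  obtain ⟨m, rfl | rfl⟩ := n.eq_nat_or_neg <;> simpa using Nat.norm_cast_le (α := 𝕜) m

theorem summable_norm_pow_mul_thetaTerm (k : ℕ) (hQ : Q ≠ 0) (hQ1 : ‖Q‖ < 1) (hz : z ≠ 0) :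
    Summable fun n : ℤ => ‖(n : 𝕜) ^ k * thetaTerm Q z n‖ := by
  refine (summable_abs_pow_mul_norm_thetaTerm k hQ hQ1 hz).of_nonneg_of_le
    (fun n => norm_nonneg _) fun n => ?_
  rw [norm_mul, norm_pow]
  gcongr
  exact norm_intCast_le_abs n

end Theta

section GaussianBinomial

variable {𝕜 : Type*} [Field 𝕜] {q : 𝕜}

/-- The Gaussian binomial coefficient, with an integer lower index so that it vanishes outside
`0 ≤ k ≤ n` and sums over `k` can be shifted freely. -/
def gaussBinom (q : 𝕜) : ℕ → ℤ → 𝕜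
  | 0, k => if k = 0 then 1 else 0
  | n + 1, k => gaussBinom q n (k - 1) + q ^ k * gaussBinom q n k

theorem gaussBinom_succ (q : 𝕜) (n : ℕ) (k : ℤ) :
    gaussBinom q (n + 1) k = gaussBinom q n (k - 1) + q ^ k * gaussBinom q n k := rfl

theorem gaussBinom_eq_zero (q : 𝕜) {n : ℕ} {k : ℤ} (h : k < 0 ∨ n < k) :
    gaussBinom q n k = 0 := by
  induction n generalizing k with
  | zero => exact if_neg (by omega)
  | succ n ih => rw [gaussBinom_succ, ih (by omega), ih (by omega), mul_zero, add_zero]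

theorem gaussBinom_zero_right (q : 𝕜) (n : ℕ) : gaussBinom q n 0 = 1 := by
  induction n with
  | zero => exact if_pos rfl
  | succ n ih => simp [gaussBinom_succ, ih, gaussBinom_eq_zero]

theorem gaussBinom_self (q : 𝕜) (n : ℕ) : gaussBinom q n n = 1 := by
  induction n with
  | zero => exact if_pos rfl
  | succ n ih => simp [gaussBinom_succ, ih, gaussBinom_eq_zero]

end GaussianBinomial

section JacobiTripleProduct

variable {𝕜 : Type*} [NormedField 𝕜] {Q z : 𝕜}

theorem gaussBinom_mul_qPochhammer (q : 𝕜) (a b : ℕ) :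
    gaussBinom q (a + b) a * (qPochhammer q q a * qPochhammer q q b) = qPochhammer q q (a + b) := by
  induction a generalizing b with
  | zero => simp [gaussBinom_zero_right, qPochhammer_zero]
  | succ a iha =>
    induction b with
    | zero => simp only [add_zero, gaussBinom_self, qPochhammer_zero, one_mul, mul_one]
    | succ b ihb =>
      have hsplit : gaussBinom q (a + 1 + b + 1) (a + 1 : ℕ) =
          gaussBinom q (a + 1 + b) a + q ^ (a + 1) * gaussBinom q (a + 1 + b) (a + 1 : ℕ) := by
        rw [gaussBinom_succ, zpow_natCast, Nat.cast_succ, add_sub_cancel_right]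
      have iha' := iha (b + 1)
      rw [show a + (b + 1) = a + 1 + b by ring] at iha'
      rw [← add_assoc, hsplit, qPochhammer_succ _ _ (a + 1 + b)]
      linear_combination (gaussBinom q (a + 1 + b) a * qPochhammer q q (b + 1)) *
          qPochhammer_succ q q a + (1 - q * q ^ a) * iha' +
        q ^ (a + 1) * gaussBinom q (a + 1 + b) (a + 1 : ℕ) * qPochhammer q q (a + 1) *
          qPochhammer_succ q q b + q ^ (a + 1) * (1 - q * q ^ b) * ihb

theorem hasSum_gaussBinom_mul_thetaTerm (hQ : Q ≠ 0) (hz : z ≠ 0) (n : ℕ) :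
    HasSum (fun k : ℤ => gaussBinom Q n k * thetaTerm Q z k) (qPochhammer (-z) Q n) := by
  induction n generalizing z with
  | zero =>
    rw [qPochhammer_zero]
    refine (hasSum_ite_eq 0 (1 : 𝕜)).congr_fun fun k => ?_
    by_cases hk : k = 0 <;> simp [gaussBinom, hk, thetaTerm_zero]
  | succ n ih =>
    have hzQ := mul_ne_zero hz hQ
    have hsum := (ih hzQ).add
      (((Equiv.subRight (1 : ℤ)).hasSum_iff.mpr (ih hzQ)).mul_left z)
    rw [qPochhammer_succ', neg_mul]
    convert hsum using 1
    · funext k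
      have hshift : thetaTerm Q z k = z * thetaTerm Q (z * Q) (k - 1) := by
        simpa [thetaTerm_one] using thetaTerm_add hQ hz 1 (k - 1)
      have hscale : thetaTerm Q (z * Q) k = Q ^ k * thetaTerm Q z k := by
        simp only [thetaTerm, mul_zpow]; ring
      simp only [gaussBinom_succ, Function.comp_apply, Equiv.subRight_apply, hscale]
      rw [add_mul, hshift]
      ring
    · ring

theorem qPochhammer_neg_div_pow (hQ : Q ≠ 0) (hz : z ≠ 0) (n : ℕ) :
    qPochhammer (-(z / Q ^ n)) Q n =
      thetaTerm Q (z / Q ^ n) n * qPochhammer (-(Q / z)) Q n := by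
  induction n with
  | zero => simp [qPochhammer_zero, thetaTerm_zero]
  | succ n ih =>
    have hcancel : z / Q ^ (n + 1) * Q = z / Q ^ n := by
      rw [pow_succ]; field_simp
    have hterm : thetaTerm Q (z / Q ^ (n + 1)) (n + 1 : ℕ) =
        z / Q ^ (n + 1) * thetaTerm Q (z / Q ^ n) n := by
      rw [Nat.cast_succ, add_comm (n : ℤ), thetaTerm_add hQ (div_ne_zero hz (pow_ne_zero _ hQ)),
        thetaTerm_one, zpow_one, hcancel]
    rw [qPochhammer_succ', qPochhammer_succ, neg_mul, hcancel, ih, hterm]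
    field_simp
    ring

theorem hasSum_gaussBinom_central_mul_thetaTerm (hQ : Q ≠ 0) (hz : z ≠ 0) (n : ℕ) :
    HasSum (fun m : ℤ => gaussBinom Q (n + n) (n + m) * thetaTerm Q z m)
      (qPochhammer (-z) Q n * qPochhammer (-(Q / z)) Q n) := by
  set x := z / Q ^ n with hx
  have hx0 : x ≠ 0 := div_ne_zero hz (pow_ne_zero _ hQ)
  have hxn : x * Q ^ n = z := div_mul_cancel₀ z (pow_ne_zero _ hQ)
  have hc : thetaTerm Q x n ≠ 0 := mul_ne_zero (zpow_ne_zero _ hQ) (zpow_ne_zero _ hx0)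
  have hsum := ((Equiv.addLeft (n : ℤ)).hasSum_iff.mpr
    (hasSum_gaussBinom_mul_thetaTerm hQ hx0 (n + n))).mul_left (thetaTerm Q x n)⁻¹
  rw [qPochhammer_add, neg_mul, hxn, qPochhammer_neg_div_pow hQ hz, ← hx, mul_assoc,
    inv_mul_cancel_left₀ hc, mul_comm] at hsum
  refine hsum.congr_fun fun m => ?_
  simp only [Function.comp_apply, Equiv.coe_addLeft]
  rw [thetaTerm_add hQ hx0, zpow_natCast, hxn]
  field_simp

variable [CompleteSpace 𝕜]

theorem exists_norm_gaussBinom_le (hQ1 : ‖Q‖ < 1) : ∃ C, ∀ n k, ‖gaussBinom Q n k‖ ≤ C := by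
  have hlim := tendsto_qPochhammer hQ1 Q
  obtain ⟨A, hA⟩ := hlim.norm.bddAbove_range
  obtain ⟨B, hB⟩ := (hlim.inv₀ (qPochhammerInf_ne_zero hQ1 hQ1)).norm.bddAbove_range
  replace hA n : ‖qPochhammer Q Q n‖ ≤ A := hA (Set.mem_range_self n)
  replace hB n : ‖(qPochhammer Q Q n)⁻¹‖ ≤ B := hB (Set.mem_range_self n)
  have hA0 : 0 ≤ A := (norm_nonneg _).trans (hA 0)
  have hB0 : 0 ≤ B := (norm_nonneg _).trans (hB 0)
  refine ⟨A * (B * B), fun n k => ?_⟩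
  by_cases hk : k < 0 ∨ n < k
  · rw [gaussBinom_eq_zero Q hk, norm_zero]
    positivity
  · obtain ⟨a, rfl⟩ := Int.eq_ofNat_of_zero_le (by omega : 0 ≤ k)
    obtain ⟨b, rfl⟩ := Nat.exists_eq_add_of_le (by omega : a ≤ n)
    have h : gaussBinom Q (a + b) a =
        qPochhammer Q Q (a + b) * ((qPochhammer Q Q a)⁻¹ * (qPochhammer Q Q b)⁻¹) := by
      rw [← gaussBinom_mul_qPochhammer]
      field_simp [qPochhammer_self_ne_zero hQ1]
    rw [h, norm_mul, norm_mul]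
    gcongr <;> apply_assumption

theorem tendsto_gaussBinom_central (hQ1 : ‖Q‖ < 1) (m : ℤ) :
    Tendsto (fun n : ℕ => gaussBinom Q (n + n) (n + m)) atTop (𝓝 (qPochhammerInf Q Q)⁻¹) := by
  have hlim := tendsto_qPochhammer hQ1 Q
  have hE := qPochhammerInf_ne_zero hQ1 hQ1
  have htop (l : ℤ) : Tendsto (fun n : ℕ => (n + l).toNat) atTop atTop :=
    tendsto_atTop.mpr fun b => by
      filter_upwards [eventually_ge_atTop (b + l.natAbs)] with n hn
      omega
  have hquot := (hlim.comp (tendsto_id.atTop_add_atTop tendsto_id)).div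
    ((hlim.comp (htop m)).mul (hlim.comp (htop (-m)))) (mul_ne_zero hE hE)
  rw [div_mul_cancel_left₀ hE] at hquot
  refine hquot.congr' ?_
  filter_upwards [eventually_ge_atTop m.natAbs] with n hn
  have h := gaussBinom_mul_qPochhammer Q (n + m).toNat (n + -m).toNat
  rw [show (n + m).toNat + (n + -m).toNat = n + n by omega, Int.toNat_of_nonneg (by omega)] at h
  simp only [Pi.div_apply, Function.comp_apply, id]
  rw [← h]
  field_simp [qPochhammer_self_ne_zero hQ1]

theorem tendsto_tsum_gaussBinom_central_mul (hQ1 : ‖Q‖ < 1) {w : ℤ → 𝕜}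
    (hw : Summable fun m => ‖w m‖) :
    Tendsto (fun n : ℕ => ∑' m : ℤ, gaussBinom Q (n + n) (n + m) * w m) atTop
      (𝓝 ((qPochhammerInf Q Q)⁻¹ * ∑' m, w m)) := by
  obtain ⟨C, hC⟩ := exists_norm_gaussBinom_le hQ1
  rw [← tsum_mul_left]
  refine tendsto_tsum_of_dominated_convergence (hw.mul_left C)
    (fun m => (tendsto_gaussBinom_central hQ1 m).mul_const (w m)) (.of_forall fun n m => ?_)
  rw [norm_mul]
  gcongr
  exact hC _ _

theorem jacobi_triple_product (hQ : Q ≠ 0) (hQ1 : ‖Q‖ < 1) (hz : z ≠ 0) :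
    theta Q (-z) = qPochhammerInf z Q * qPochhammerInf (Q / z) Q * qPochhammerInf Q Q := by
  have hz' := neg_ne_zero.mpr hz
  have hsum := tendsto_tsum_gaussBinom_central_mul hQ1 (summable_norm_thetaTerm hQ hQ1 hz')
  have hprod := (tendsto_qPochhammer hQ1 z).mul (tendsto_qPochhammer hQ1 (Q / z))
  have heq := tendsto_nhds_unique hsum (hprod.congr fun n => ?_)
  · rw [← heq, theta, mul_comm, mul_inv_cancel_left₀ (qPochhammerInf_ne_zero hQ1 hQ1)]
  · rw [(hasSum_gaussBinom_central_mul_thetaTerm hQ hz' n).tsum_eq, div_neg, neg_neg, neg_neg]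

end JacobiTripleProduct

section JacobiCube

variable {𝕜 : Type*} [NontriviallyNormedField 𝕜] {Q : 𝕜}

theorem hasDerivAt_thetaTerm_neg_one (Q : 𝕜) (m : ℤ) :
    HasDerivAt (fun z => thetaTerm Q (-z) m) (m * thetaTerm Q (-1) m) 1 := by
  have h := ((hasDerivAt_zpow m (-1 : 𝕜) (.inl (by simp))).comp 1 (hasDerivAt_neg 1)).const_mul
    (Q ^ tri m)
  refine h.congr_deriv ?_
  rw [zpow_sub_one₀ (by simp), thetaTerm, inv_neg_one]
  ring

theorem hasDerivAt_qPochhammer_mul_qPochhammer_div (Q : 𝕜) (n : ℕ) :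
    HasDerivAt (fun z => qPochhammer z Q (n + 1) * qPochhammer (Q / z) Q (n + 1))
      (-(qPochhammer Q Q n * qPochhammer Q Q (n + 1))) 1 := by
  have hdiff : DifferentiableAt 𝕜
      (fun z => qPochhammer (z * Q) Q n * qPochhammer (Q / z) Q (n + 1)) 1 := by
    unfold qPochhammer
    fun_prop (disch := simp)
  have h := ((hasDerivAt_id (1 : 𝕜)).const_sub 1).mul hdiff.hasDerivAt
  refine (h.congr_deriv ?_).congr_of_eventuallyEq (.of_forall fun z => ?_)
  · simp
  · simp only [qPochhammer_succ' z Q n, Pi.mul_apply, id, mul_assoc]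

theorem tsum_gaussBinom_central_mul_intCast_mul_thetaTerm (hQ : Q ≠ 0) (n : ℕ) :
    ∑' m : ℤ, gaussBinom Q (n + 1 + (n + 1)) ((n + 1 : ℕ) + m) * (m * thetaTerm Q (-1) m) =
      -(qPochhammer Q Q n * qPochhammer Q Q (n + 1)) := by
  have hzero (m : ℤ) (hm : m ∉ Finset.Icc (-(n + 1 : ℤ)) (n + 1)) :
      gaussBinom Q (n + 1 + (n + 1)) ((n + 1 : ℕ) + m) = 0 := by
    rw [Finset.mem_Icc] at hm
    exact gaussBinom_eq_zero Q (by omega)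
  rw [tsum_eq_sum fun m hm => by rw [hzero m hm, zero_mul]]
  refine HasDerivAt.unique (HasDerivAt.fun_sum fun m _ =>
    (hasDerivAt_thetaTerm_neg_one Q m).const_mul _)
    ((hasDerivAt_qPochhammer_mul_qPochhammer_div Q n).congr_of_eventuallyEq ?_)
  filter_upwards [isOpen_ne.mem_nhds (one_ne_zero : (1 : 𝕜) ≠ 0)] with z hz
  have h := (hasSum_gaussBinom_central_mul_thetaTerm hQ (neg_ne_zero.mpr hz) (n + 1)).tsum_eq
  rw [tsum_eq_sum fun m hm => by rw [hzero m hm, zero_mul]] at h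
  rw [h, div_neg, neg_neg, neg_neg]

variable [CompleteSpace 𝕜]

theorem tsum_intCast_mul_thetaTerm_neg_one (hQ : Q ≠ 0) (hQ1 : ‖Q‖ < 1) :
    ∑' m : ℤ, m * thetaTerm Q (-1) m = -qPochhammerInf Q Q ^ 3 := by
  have hsummable : Summable fun m : ℤ => ‖(m : 𝕜) * thetaTerm Q (-1) m‖ := by
    simpa using summable_norm_pow_mul_thetaTerm 1 hQ hQ1 (neg_ne_zero.mpr one_ne_zero)
  have hlim := tendsto_qPochhammer hQ1 Q
  have hsum := (tendsto_tsum_gaussBinom_central_mul hQ1 hsummable).comp (tendsto_add_atTop_nat 1)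
  have hprod := (hlim.mul (hlim.comp (tendsto_add_atTop_nat 1))).neg
  have heq := tendsto_nhds_unique hsum (hprod.congr fun n =>
    (tsum_gaussBinom_central_mul_intCast_mul_thetaTerm hQ n).symm)
  rw [inv_mul_eq_iff_eq_mul₀ (qPochhammerInf_ne_zero hQ1 hQ1)] at heq
  rw [heq]
  ring

end JacobiCube

section ThetaTransformations

variable {𝕜 : Type*} [NormedField 𝕜] {Q z : 𝕜}

theorem theta_div (hQ : Q ≠ 0) (z : 𝕜) : theta Q (Q / z) = theta Q z := by
  simp only [theta, ← thetaTerm_neg hQ]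
  exact (Equiv.neg ℤ).tsum_eq _

theorem tsum_mul_thetaTerm_inv (hz : z ≠ 0) (w : ℤ → 𝕜) :
    ∑' n : ℤ, w n * thetaTerm Q z⁻¹ n = z⁻¹ * ∑' n : ℤ, w (1 - n) * thetaTerm Q z n := by
  have htri (n : ℤ) : tri (1 - n) = tri n := by
    linarith [two_mul_tri (1 - n), two_mul_tri n]
  rw [← (Equiv.subLeft (1 : ℤ)).tsum_eq, ← tsum_mul_left]
  refine tsum_congr fun n => ?_
  simp only [Equiv.subLeft_apply, thetaTerm, htri, zpow_sub₀ (inv_ne_zero hz), inv_zpow, zpow_one,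
    div_inv_eq_mul]
  ring

theorem theta_inv (hz : z ≠ 0) : theta Q z⁻¹ = z⁻¹ * theta Q z := by
  simpa [theta] using tsum_mul_thetaTerm_inv (Q := Q) hz 1

theorem qPochhammerInf_one (Q : 𝕜) : qPochhammerInf 1 Q = 0 :=
  tprod_of_exists_eq_zero ⟨0, by simp⟩

theorem theta_neg_one [CompleteSpace 𝕜] (hQ : Q ≠ 0) (hQ1 : ‖Q‖ < 1) : theta Q (-1) = 0 := by
  rw [jacobi_triple_product hQ hQ1 one_ne_zero, qPochhammerInf_one, zero_mul, zero_mul]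

end ThetaTransformations

section Dissection

/-- The sublattice of `ℤ × ℤ` spanned by `(1, k)` and `(-k, 1)` has index `k ^ 2 + 1`, and the
points `(c, 0)` with `0 ≤ c ≤ k ^ 2` represent its cosets. -/
def latticeDissection (k : ℕ) : Fin (k ^ 2 + 1) × ℤ × ℤ ≃ ℤ × ℤ where
  toFun p := (p.2.1 - k * p.2.2 + p.1, k * p.2.1 + p.2.2)
  invFun p :=
    let d := Int.divModEquiv (k ^ 2 + 1) (p.1 + k * p.2)
    (d.2, d.1, p.2 - k * d.1)
  left_inv := by
    rintro ⟨c, s, t⟩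
    have h : s - k * t + c + k * (k * s + t) = (Int.divModEquiv (k ^ 2 + 1)).symm (s, c) := by
      simp only [Int.divModEquiv_symm_apply]
      push_cast
      ring
    simp only [h, Equiv.apply_symm_apply, add_sub_cancel_left]
  right_inv := by
    rintro ⟨i, j⟩
    have h := (Int.divModEquiv (k ^ 2 + 1)).symm_apply_apply (i + k * j)
    simp only [Int.divModEquiv_symm_apply] at h
    push_cast at h
    ext
    · dsimp only
      linear_combination h
    · dsimp only
      ring

variable {𝕜 : Type*} [NormedField 𝕜] {Q a b : 𝕜}

theorem thetaTerm_mul_thetaTerm_latticeDissection (hQ : Q ≠ 0) (ha : a ≠ 0) (hb : b ≠ 0)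
    (k c : ℕ) (s t : ℤ) :
    thetaTerm Q a (s - k * t + c) * thetaTerm Q b (k * s + t) =
      thetaTerm Q a c * (thetaTerm (Q ^ (k ^ 2 + 1)) (a * b ^ k * Q ^ (c + tri k)) s *
        thetaTerm (Q ^ (k ^ 2 + 1)) (b / a ^ k * Q ^ (tri (k + 1) - k * c)) t) := by
  have hexp : tri (s - k * t + c) + tri (k * s + t) = tri c + (((k ^ 2 + 1 : ℕ) * tri s +
      (c + tri k) * s) + ((k ^ 2 + 1 : ℕ) * tri t + (tri (k + 1) - k * c) * t)) := by
    rw [sub_eq_add_neg, ← neg_mul, tri_add, tri_add, tri_add (k * s), tri_mul, tri_mul, tri_neg,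
      tri_add k, show tri 1 = 0 from rfl]
    push_cast
    ring
  have hQpow : Q ^ tri (s - k * t + c) * Q ^ tri (k * s + t) =
      Q ^ tri c * ((Q ^ (k ^ 2 + 1)) ^ tri s * (Q ^ (c + tri k)) ^ s *
        ((Q ^ (k ^ 2 + 1)) ^ tri t * (Q ^ (tri (k + 1) - k * c)) ^ t)) := by
    rw [← zpow_add₀ hQ, hexp]
    simp only [zpow_add₀ hQ, zpow_mul, zpow_natCast]
  simp only [thetaTerm, mul_zpow, div_zpow, zpow_add₀ ha, zpow_sub₀ ha, zpow_add₀ hb, zpow_mul,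
    zpow_natCast]
  linear_combination a ^ s / (a ^ k) ^ t * a ^ c * (b ^ k) ^ s * b ^ t * hQpow

variable [CompleteSpace 𝕜]

theorem tsum_eq_sum_tsum_latticeDissection (k : ℕ) {F : ℤ × ℤ → 𝕜} (hF : Summable F) :
    ∑' p, F p = ∑ c ∈ Finset.range (k ^ 2 + 1),
      ∑' p : ℤ × ℤ, F (p.1 - k * p.2 + c, k * p.1 + p.2) := by
  have hF' : Summable fun p => F (latticeDissection k p) :=
    (latticeDissection k).summable_iff.mpr hF
  rw [← (latticeDissection k).tsum_eq F, Finset.sum_range, hF'.tsum_prod, tsum_fintype]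
  rfl

theorem tsum_mul_thetaTerm_mul_thetaTerm (hQ : Q ≠ 0) (hQ1 : ‖Q‖ < 1) (ha : a ≠ 0) (hb : b ≠ 0)
    (k : ℕ) {w : ℤ → 𝕜}
    (hw : Summable fun p : ℤ × ℤ =>
      w (p.2 - k * p.1) * (thetaTerm Q a p.1 * thetaTerm Q b p.2)) :
    ∑' p : ℤ × ℤ, w (p.2 - k * p.1) * (thetaTerm Q a p.1 * thetaTerm Q b p.2) =
      ∑ c ∈ Finset.range (k ^ 2 + 1), thetaTerm Q a c *
        theta (Q ^ (k ^ 2 + 1)) (a * b ^ k * Q ^ (c + tri k)) *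
        ∑' t : ℤ, w ((k ^ 2 + 1) * t - k * c) *
          thetaTerm (Q ^ (k ^ 2 + 1)) (b / a ^ k * Q ^ (tri (k + 1) - k * c)) t := by
  rw [tsum_eq_sum_tsum_latticeDissection k hw]
  refine Finset.sum_congr rfl fun c hc => ?_
  set A := a * b ^ k * Q ^ (c + tri k)
  set B := b / a ^ k * Q ^ (tri (k + 1) - k * c)
  set f := thetaTerm (Q ^ (k ^ 2 + 1)) A
  set g := fun t : ℤ => w ((k ^ 2 + 1) * t - k * c) * thetaTerm (Q ^ (k ^ 2 + 1)) B t
  have hterm (p : ℤ × ℤ) : w (k * p.1 + p.2 - k * (p.1 - k * p.2 + c)) *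
      (thetaTerm Q a (p.1 - k * p.2 + c) * thetaTerm Q b (k * p.1 + p.2)) =
        thetaTerm Q a c * (f p.1 * g p.2) := by
    rw [thetaTerm_mul_thetaTerm_latticeDissection hQ ha hb,
      show k * p.1 + p.2 - k * (p.1 - k * p.2 + c) = (k ^ 2 + 1) * p.2 - k * c by ring]
    ring
  have hc0 : thetaTerm Q a c ≠ 0 := mul_ne_zero (zpow_ne_zero _ hQ) (zpow_ne_zero _ ha)
  have hA : A ≠ 0 := mul_ne_zero (mul_ne_zero ha (pow_ne_zero _ hb)) (zpow_ne_zero _ hQ)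
  have hQk : ‖Q ^ (k ^ 2 + 1)‖ < 1 := by
    rw [norm_pow]
    exact pow_lt_one₀ (norm_nonneg Q) hQ1 (Nat.succ_ne_zero _)
  have hf : Summable f := (summable_norm_thetaTerm (pow_ne_zero _ hQ) hQk hA).of_norm
  have hfg : Summable fun p : ℤ × ℤ => f p.1 * g p.2 := by
    have hcoset : Function.Injective fun p : ℤ × ℤ => (p.1 - k * p.2 + c, k * p.1 + p.2) :=
      (latticeDissection k).injective.comp
        (Prod.mk_right_injective (⟨c, Finset.mem_range.mp hc⟩ : Fin (k ^ 2 + 1)))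
    refine ((hw.comp_injective hcoset).mul_left (thetaTerm Q a c)⁻¹).congr fun p => ?_
    rw [Function.comp_apply, hterm, inv_mul_cancel_left₀ hc0]
  have hg : Summable g := by
    simpa [f, Function.comp_def, thetaTerm_zero] using
      hfg.comp_injective (Prod.mk_right_injective (0 : ℤ))
  simp only [hterm]
  rw [tsum_mul_left, ← hf.tsum_mul_tsum hg hfg, theta, mul_assoc]

end Dissection

section ThreeTerm

variable {𝕜 : Type*} [NormedField 𝕜] [CompleteSpace 𝕜] {Q : 𝕜}

theorem hasSum_mul_of_summable_norm {ι κ : Type*} {f : ι → 𝕜} {g : κ → 𝕜}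
    (hf : Summable fun i => ‖f i‖) (hg : Summable fun j => ‖g j‖) :
    HasSum (fun p : ι × κ => f p.1 * g p.2) ((∑' i, f i) * ∑' j, g j) := by
  rw [tsum_mul_tsum_of_summable_norm hf hg]
  exact (summable_mul_of_summable_norm hf hg).hasSum

theorem theta_mul_theta (hQ : Q ≠ 0) (hQ1 : ‖Q‖ < 1) {a b : 𝕜} (ha : a ≠ 0) (hb : b ≠ 0) (k : ℕ) :
    theta Q a * theta Q b = ∑ c ∈ Finset.range (k ^ 2 + 1), thetaTerm Q a c *
      theta (Q ^ (k ^ 2 + 1)) (a * b ^ k * Q ^ (c + tri k)) *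
      theta (Q ^ (k ^ 2 + 1)) (b / a ^ k * Q ^ (tri (k + 1) - k * c)) := by
  have hab := hasSum_mul_of_summable_norm (summable_norm_thetaTerm hQ hQ1 ha)
    (summable_norm_thetaTerm hQ hQ1 hb)
  have h := tsum_mul_thetaTerm_mul_thetaTerm hQ hQ1 ha hb k (w := fun _ => 1)
    (by simpa only [one_mul] using hab.summable)
  simp only [one_mul, hab.tsum_eq] at h
  exact h

theorem theta_neg_mul_theta_neg_div (hQ : Q ≠ 0) (hQ1 : ‖Q‖ < 1) {x y : 𝕜} (hx : x ≠ 0)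
    (hy : y ≠ 0) :
    theta Q (-(x * y)) * theta Q (-(x / y)) =
      theta (Q ^ 2) (x ^ 2) * theta (Q ^ 2) (y ^ 2 * Q) -
        x / y * (theta (Q ^ 2) (x ^ 2 * Q) * theta (Q ^ 2) (y ^ 2)) := by
  have h := theta_mul_theta hQ hQ1 (neg_ne_zero.mpr (div_ne_zero hx hy))
    (neg_ne_zero.mpr (mul_ne_zero hx hy)) 1
  have hprod : -(x / y) * -(x * y) = x ^ 2 := by field_simp
  have hquot : -(x * y) / -(x / y) = y ^ 2 := by field_simp
  rw [mul_comm, h]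
  rw [Nat.cast_one, show tri 1 = 0 from rfl, show tri (1 + 1) = 1 from rfl]
  simp only [one_pow, Nat.reduceAdd, Finset.sum_range_succ, Finset.sum_range_zero, pow_one, hprod,
    hquot, Nat.cast_zero, Nat.cast_one, thetaTerm_zero, thetaTerm_one, zero_add, add_zero, one_mul,
    mul_one, sub_zero, sub_self, zpow_zero, zpow_one]
  ring

/-- The Weierstrass three-term relation. -/
theorem theta_three_term (hQ : Q ≠ 0) (hQ1 : ‖Q‖ < 1) {x y z w : 𝕜} (hx : x ≠ 0) (hy : y ≠ 0)
    (hz : z ≠ 0) (hw : w ≠ 0) :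
    y * (theta Q (-(x * y)) * theta Q (-(x / y))) * (theta Q (-(z * w)) * theta Q (-(z / w))) -
      z * (theta Q (-(x * z)) * theta Q (-(x / z))) * (theta Q (-(y * w)) * theta Q (-(y / w))) +
      z * (theta Q (-(x * w)) * theta Q (-(x / w))) * (theta Q (-(y * z)) * theta Q (-(y / z))) =
        0 := by
  simp only [theta_neg_mul_theta_neg_div hQ hQ1, hx, hy, hz, hw, ne_eq, not_false_eq_true]
  field_simp
  ring

end ThreeTerm

section EulerProduct

variable {𝕜 : Type*} [NormedField 𝕜] {q : 𝕜}

/-- Euler's product `E(q) = (q; q)_∞` over an arbitrary normed field. -/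
noncomputable def eulerProduct (q : 𝕜) : 𝕜 := qPochhammerInf q q

/-- The theta series `∑ (-1) ^ n * q ^ (m * n (n - 1) / 2 + i * n)`, that is, the product
`(q ^ i; q ^ m)_∞ * (q ^ (m - i); q ^ m)_∞ * (q ^ m; q ^ m)_∞`. -/
noncomputable def alternatingTheta (q : 𝕜) (m : ℕ) (i : ℤ) : 𝕜 := theta (q ^ m) (-q ^ i)

theorem alternatingTheta_sub (hq : q ≠ 0) (m : ℕ) (i : ℤ) :
    alternatingTheta q m (m - i) = alternatingTheta q m i := by
  rw [alternatingTheta, alternatingTheta, ← theta_div (pow_ne_zero m hq), div_neg, zpow_sub₀ hq,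
    zpow_natCast, div_div_cancel₀ (pow_ne_zero m hq)]

theorem alternatingTheta_neg (hq : q ≠ 0) (m : ℕ) (i : ℤ) :
    alternatingTheta q m (-i) = -(q ^ i)⁻¹ * alternatingTheta q m i := by
  have h := theta_inv (Q := q ^ m) (neg_ne_zero.mpr (zpow_ne_zero i hq))
  rwa [inv_neg, ← zpow_neg, ← alternatingTheta, ← alternatingTheta, zpow_neg] at h

theorem alternatingTheta_pow (q : 𝕜) (k m : ℕ) (i : ℤ) :
    alternatingTheta (q ^ k) m i = alternatingTheta q (k * m) (k * i) := by
  simp only [alternatingTheta, pow_mul, zpow_mul, zpow_natCast]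

variable [CompleteSpace 𝕜]

theorem eulerProduct_pow_ne_zero (hq1 : ‖q‖ < 1) {k : ℕ} (hk : k ≠ 0) :
    eulerProduct (q ^ k) ≠ 0 := by
  have hqk : ‖q ^ k‖ < 1 := by
    rw [norm_pow]
    exact pow_lt_one₀ (norm_nonneg q) hq1 hk
  exact qPochhammerInf_ne_zero hqk hqk

theorem alternatingTheta_zero (hq : q ≠ 0) (hq1 : ‖q‖ < 1) {m : ℕ} (hm : m ≠ 0) :
    alternatingTheta q m 0 = 0 := by
  rw [alternatingTheta, zpow_zero]
  exact theta_neg_one (pow_ne_zero m hq) (by simpa using pow_lt_one₀ (norm_nonneg q) hq1 hm)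

theorem alternatingTheta_eq_qPochhammerInf (hq : q ≠ 0) (hq1 : ‖q‖ < 1) {m i : ℕ} (hm : m ≠ 0)
    (him : i ≤ m) :
    alternatingTheta q m i = qPochhammerInf (q ^ i) (q ^ m) * qPochhammerInf (q ^ (m - i)) (q ^ m) *
      qPochhammerInf (q ^ m) (q ^ m) := by
  have hqm : ‖q ^ m‖ < 1 := by simpa using pow_lt_one₀ (norm_nonneg q) hq1 hm
  rw [alternatingTheta, zpow_natCast, jacobi_triple_product (pow_ne_zero m hq) hqm
    (pow_ne_zero i hq), pow_sub₀ q hq him, div_eq_mul_inv]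

theorem eulerProduct_eq_prod (hq1 : ‖q‖ < 1) {m : ℕ} (hm : 0 < m) :
    eulerProduct q = ∏ i ∈ Finset.range m, qPochhammerInf (q ^ (i + 1)) (q ^ m) := by
  simp only [eulerProduct, qPochhammerInf_eq_prod hq1 q hm, pow_succ']

theorem eulerProduct_eq_alternatingTheta (hq : q ≠ 0) (hq1 : ‖q‖ < 1) :
    eulerProduct q = alternatingTheta q 3 1 := by
  have h := alternatingTheta_eq_qPochhammerInf hq hq1 (m := 3) (i := 1) (by norm_num) (by norm_num)
  rw [Nat.cast_one] at h
  rw [h, eulerProduct_eq_prod hq1 (m := 3) (by norm_num)]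
  simp [Finset.prod_range_succ]

theorem eulerProduct_sq (hq : q ≠ 0) (hq1 : ‖q‖ < 1) :
    eulerProduct q ^ 2 = alternatingTheta q 2 1 * eulerProduct (q ^ 2) := by
  have h := alternatingTheta_eq_qPochhammerInf hq hq1 (m := 2) (i := 1) (by norm_num) (by norm_num)
  rw [Nat.cast_one] at h
  rw [h, eulerProduct_eq_prod hq1 (m := 2) (by norm_num), eulerProduct]
  simp only [Finset.prod_range_succ, Finset.prod_range_zero, Nat.reduceAdd, Nat.reduceSub,
    zero_add, pow_one]
  ring

theorem eulerProduct_mul_eulerProduct_pow_five (hq : q ≠ 0) (hq1 : ‖q‖ < 1) :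
    eulerProduct q * eulerProduct (q ^ 5) = alternatingTheta q 5 1 * alternatingTheta q 5 3 := by
  have h1 := alternatingTheta_eq_qPochhammerInf hq hq1 (m := 5) (i := 1) (by norm_num) (by norm_num)
  have h3 := alternatingTheta_eq_qPochhammerInf hq hq1 (m := 5) (i := 3) (by norm_num) (by norm_num)
  norm_cast at h1 h3
  rw [h1, h3, eulerProduct_eq_prod hq1 (m := 5) (by norm_num), eulerProduct]
  simp only [Finset.prod_range_succ, Finset.prod_range_zero, Nat.reduceAdd, Nat.reduceSub,
    zero_add, pow_one]
  ring

theorem alternatingTheta_mul_eulerProduct_sq (hq : q ≠ 0) (hq1 : ‖q‖ < 1) {m i : ℕ} (hm : m ≠ 0)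
    (him : i ≤ m) :
    alternatingTheta q m i * eulerProduct (q ^ (2 * m)) ^ 2 =
      eulerProduct (q ^ m) *
        (alternatingTheta q (2 * m) i * alternatingTheta q (2 * m) (m - i)) := by
  have h2m : 2 * m ≠ 0 := by omega
  have hqm : ‖q ^ m‖ < 1 := by simpa using pow_lt_one₀ (norm_nonneg q) hq1 hm
  have hi := alternatingTheta_eq_qPochhammerInf hq hq1 h2m (i := i) (by omega)
  have hmi := alternatingTheta_eq_qPochhammerInf hq hq1 h2m (i := m - i) (by omega)
  rw [Nat.cast_sub him] at hmi
  rw [hi, hmi, alternatingTheta_eq_qPochhammerInf hq hq1 hm him,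
    qPochhammerInf_eq_prod hqm _ Nat.two_pos, qPochhammerInf_eq_prod hqm (q ^ (m - i)) Nat.two_pos,
    eulerProduct, eulerProduct]
  simp only [Finset.prod_range_succ, Finset.prod_range_zero, one_mul, mul_one, mul_zero,
    ← pow_mul, ← pow_add, mul_comm m 2, add_zero]
  rw [show 2 * m - i = m - i + m by omega, show 2 * m - (m - i) = i + m by omega]
  ring

end EulerProduct

section LevelTen

variable {𝕜 : Type*} [NormedField 𝕜] {q : 𝕜}

theorem neg_zpow_mul_neg_zpow_sq_mul_zpow (hq : q ≠ 0) (m : ℕ) (i j n : ℤ) :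
    -q ^ i * (-q ^ j) ^ 2 * (q ^ m) ^ n = -q ^ (i + 2 * j + m * n) := by
  rw [zpow_add₀ hq, zpow_add₀ hq, mul_comm 2 j, zpow_mul, zpow_mul, zpow_natCast, zpow_ofNat]
  ring

theorem neg_zpow_div_neg_zpow_sq_mul_zpow (hq : q ≠ 0) (m : ℕ) (i j n : ℤ) :
    -q ^ j / (-q ^ i) ^ 2 * (q ^ m) ^ n = -q ^ (j - 2 * i + m * n) := by
  rw [zpow_add₀ hq, zpow_sub₀ hq, mul_comm 2 i, zpow_mul, zpow_mul, zpow_natCast, zpow_ofNat]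
  ring

variable [CompleteSpace 𝕜]

theorem alternatingTheta_three_term (hq : q ≠ 0) (hq1 : ‖q‖ < 1) {m : ℕ} (hm : m ≠ 0)
    (i j k l : ℤ) :
    q ^ j * (alternatingTheta q m (i + j) * alternatingTheta q m (i - j)) *
        (alternatingTheta q m (k + l) * alternatingTheta q m (k - l)) -
      q ^ k * (alternatingTheta q m (i + k) * alternatingTheta q m (i - k)) *
        (alternatingTheta q m (j + l) * alternatingTheta q m (j - l)) +
      q ^ k * (alternatingTheta q m (i + l) * alternatingTheta q m (i - l)) *
        (alternatingTheta q m (j + k) * alternatingTheta q m (j - k)) = 0 := by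
  have hqm : ‖q ^ m‖ < 1 := by simpa using pow_lt_one₀ (norm_nonneg q) hq1 hm
  have h (n : ℤ) := zpow_ne_zero n hq
  simpa only [alternatingTheta, zpow_add₀ hq, zpow_sub₀ hq] using
    theta_three_term (pow_ne_zero m hq) hqm (h i) (h j) (h k) (h l)

theorem alternatingTheta_ten_three_term_two_four (hq : q ≠ 0) (hq1 : ‖q‖ < 1) :
    alternatingTheta q 10 2 ^ 2 * alternatingTheta q 10 4 ^ 2 =
      q * (alternatingTheta q 10 1 * alternatingTheta q 10 3) ^ 2 +
        alternatingTheta q 10 5 ^ 2 * (alternatingTheta q 10 1 * alternatingTheta q 10 3) := by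
  have hrefl (i : ℤ) : alternatingTheta q 10 (10 - i) = alternatingTheta q 10 i :=
    alternatingTheta_sub hq 10 i
  have h := alternatingTheta_three_term hq hq1 (m := 10) (by norm_num) 3 1 (-2) 6
  simp only [Int.reduceAdd, Int.reduceSub, Int.reduceNeg, alternatingTheta_neg hq, ← hrefl 7,
    ← hrefl 8, ← hrefl 9, zpow_ofNat, zpow_neg, pow_one] at h
  field_simp at h
  linear_combination -h

theorem alternatingTheta_ten_three_term_three_four (hq : q ≠ 0) (hq1 : ‖q‖ < 1) :
    alternatingTheta q 10 3 ^ 2 * alternatingTheta q 10 4 ^ 2 -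
        q ^ 2 * alternatingTheta q 10 1 ^ 2 * alternatingTheta q 10 2 ^ 2 =
      alternatingTheta q 10 2 * alternatingTheta q 10 4 * alternatingTheta q 10 5 ^ 2 := by
  have hrefl (i : ℤ) : alternatingTheta q 10 (10 - i) = alternatingTheta q 10 i :=
    alternatingTheta_sub hq 10 i
  have h := alternatingTheta_three_term hq hq1 (m := 10) (by norm_num) 3 0 5 (-1)
  simp only [Int.reduceAdd, Int.reduceSub, Int.reduceNeg, alternatingTheta_neg hq, ← hrefl 6,
    ← hrefl 8, zpow_ofNat, pow_zero, pow_one] at h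
  field_simp at h
  linear_combination h

theorem alternatingTheta_mul_alternatingTheta (hq : q ≠ 0) (hq1 : ‖q‖ < 1) {m : ℕ} (hm : m ≠ 0)
    (i j : ℤ) :
    alternatingTheta q m i * alternatingTheta q m j =
      ∑ c ∈ Finset.range 5, thetaTerm (q ^ m) (-q ^ i) c *
        alternatingTheta q (m * 5) (i + 2 * j + m * (c + 1)) *
        alternatingTheta q (m * 5) (j - 2 * i + m * (3 - 2 * c)) := by
  have hqm : ‖q ^ m‖ < 1 := by simpa using pow_lt_one₀ (norm_nonneg q) hq1 hm
  have h := theta_mul_theta (pow_ne_zero m hq) hqm (neg_ne_zero.mpr (zpow_ne_zero i hq))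
    (neg_ne_zero.mpr (zpow_ne_zero j hq)) 2
  simpa only [neg_zpow_mul_neg_zpow_sq_mul_zpow hq, neg_zpow_div_neg_zpow_sq_mul_zpow hq,
    ← pow_mul, Nat.cast_ofNat, Nat.reduceAdd, Nat.reducePow, Int.reduceAdd, alternatingTheta,
    show tri 2 = 1 from rfl, show tri 3 = 3 from rfl] using h

theorem alternatingTheta_two_sq (hq : q ≠ 0) (hq1 : ‖q‖ < 1) :
    alternatingTheta q 2 1 ^ 2 = alternatingTheta q 10 5 ^ 2 -
      4 * q * (alternatingTheta q 10 1 * alternatingTheta q 10 3) := by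
  have hrefl (i : ℤ) : alternatingTheta q 10 (10 - i) = alternatingTheta q 10 i :=
    alternatingTheta_sub hq 10 i
  have h := alternatingTheta_mul_alternatingTheta hq hq1 (m := 2) (by norm_num) 1 1
  simp only [Finset.sum_range_succ, Finset.sum_range_zero, thetaTerm, tri, Nat.cast_ofNat,
    Nat.cast_zero, Nat.cast_one, Nat.reduceMul, Int.reduceAdd, Int.reduceSub, Int.reduceMul,
    Int.reduceNeg, Int.reduceDiv, ← hrefl 7, ← hrefl 9, ← hrefl 11, ← hrefl 13,
    alternatingTheta_neg hq, zpow_ofNat, pow_one] at h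
  field_simp at h
  linear_combination h

end LevelTen

section WeightedTheta

variable {𝕜 : Type*} [NormedField 𝕜] {q : 𝕜}

/-- The theta series `∑ w n * (-1) ^ n * q ^ (m * n (n - 1) / 2 + i * n)` of `alternatingTheta`,
with an integer weight on its terms. -/
noncomputable def weightedTheta (w : ℤ → ℤ) (q : 𝕜) (m : ℕ) (i : ℤ) : 𝕜 :=
  ∑' n : ℤ, (w n : 𝕜) * thetaTerm (q ^ m) (-q ^ i) n

theorem weightedTheta_neg (hq : q ≠ 0) (w : ℤ → ℤ) (m : ℕ) (i : ℤ) :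
    weightedTheta w q m (-i) = -(q ^ i)⁻¹ * weightedTheta (fun n => w (1 - n)) q m i := by
  have h := tsum_mul_thetaTerm_inv (Q := q ^ m) (neg_ne_zero.mpr (zpow_ne_zero i hq))
    fun n => (w n : 𝕜)
  rwa [inv_neg, ← zpow_neg, ← weightedTheta, ← weightedTheta, zpow_neg] at h

end WeightedTheta

section Wronskian

variable {𝕜 : Type*} [NontriviallyNormedField 𝕜] [CompleteSpace 𝕜] {q : 𝕜}

theorem hasSum_sq_mul_thetaTerm_neg_one_mul_thetaTerm_neg_one (hq : q ≠ 0) (hq1 : ‖q‖ < 1) :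
    HasSum (fun p : ℤ × ℤ => (2 * (p.2 - 2 * p.1 : ℤ) + 1 : 𝕜) ^ 2 *
      (thetaTerm q (-1) p.1 * thetaTerm q (-1) p.2)) (-16 * eulerProduct q ^ 6) := by
  set moment : ℕ → 𝕜 := fun k => ∑' n : ℤ, (n : 𝕜) ^ k * thetaTerm q (-1) n
  have hmoment0 : moment 0 = 0 := by
    simpa only [moment, pow_zero, one_mul, theta] using theta_neg_one hq hq1
  have hmoment1 : moment 1 = -eulerProduct q ^ 3 := by
    simpa only [moment, pow_one, eulerProduct] using tsum_intCast_mul_thetaTerm_neg_one hq hq1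
  have hsummable (k : ℕ) := summable_norm_pow_mul_thetaTerm (𝕜 := 𝕜) k hq hq1
    (neg_ne_zero.mpr one_ne_zero)
  have hmul (k l : ℕ) : HasSum (fun p : ℤ × ℤ => ((p.1 : 𝕜) ^ k * thetaTerm q (-1) p.1) *
      ((p.2 : 𝕜) ^ l * thetaTerm q (-1) p.2)) (moment k * moment l) :=
    hasSum_mul_of_summable_norm (hsummable k) (hsummable l)
  have h := ((((((hmul 0 2).mul_left 4).sub ((hmul 1 1).mul_left 16)).add
    ((hmul 2 0).mul_left 16)).add ((hmul 0 1).mul_left 4)).sub ((hmul 1 0).mul_left 8)).add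
    (hmul 0 0)
  rw [hmoment0, hmoment1] at h
  ring_nf at h ⊢
  refine h.congr_fun fun p => ?_
  push_cast
  ring

theorem sum_alternatingTheta_mul_weightedTheta (hq : q ≠ 0) (hq1 : ‖q‖ < 1) :
    ∑ c ∈ Finset.range 5, thetaTerm q (-1) c * alternatingTheta q 5 (c + 1) *
      weightedTheta (fun t => (10 * t + (1 - 4 * c)) ^ 2) q 5 (3 - 2 * c) =
        -16 * eulerProduct q ^ 6 := by
  have hsum := hasSum_sq_mul_thetaTerm_neg_one_mul_thetaTerm_neg_one hq hq1
  have hneg : (-1 : 𝕜) ≠ 0 := neg_ne_zero.mpr one_ne_zero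
  have h := tsum_mul_thetaTerm_mul_thetaTerm hq hq1 hneg hneg 2 (w := fun n => (2 * n + 1) ^ 2)
    hsum.summable
  rw [← hsum.tsum_eq]
  refine Eq.trans (Finset.sum_congr rfl fun c _ => ?_) h.symm
  have hweight (t : ℤ) : (((10 * t + (1 - 4 * c)) ^ 2 : ℤ) : 𝕜) =
      (2 * ((2 ^ 2 + 1) * t - 2 * c : ℤ) + 1 : 𝕜) ^ 2 := by
    push_cast
    ring
  simp only [alternatingTheta, weightedTheta, hweight, Nat.cast_ofNat, Nat.reduceAdd,
    Nat.reducePow, Int.reduceAdd, show tri 2 = 1 from rfl, show tri 3 = 3 from rfl, neg_one_sq,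
    mul_one, div_one, neg_one_mul]

theorem alternatingTheta_mul_weightedTheta_sub [CharZero 𝕜] (hq : q ≠ 0) (hq1 : ‖q‖ < 1) :
    alternatingTheta q 5 3 * weightedTheta (fun t => (10 * t - 3) ^ 2) q 5 1 -
      alternatingTheta q 5 1 * weightedTheta (fun t => (10 * t + 1) ^ 2) q 5 3 =
        8 * eulerProduct q ^ 6 := by
  have hrefl (i : ℤ) : alternatingTheta q 5 (5 - i) = alternatingTheta q 5 i :=
    alternatingTheta_sub hq 5 i
  have hinv (s i : ℤ) : weightedTheta (fun t => (10 * t + s) ^ 2) q 5 (-i) =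
      -(q ^ i)⁻¹ * weightedTheta (fun t => (10 * t + (-10 - s)) ^ 2) q 5 i := by
    rw [weightedTheta_neg hq]
    congr! 3 with t
    ring
  have h := sum_alternatingTheta_mul_weightedTheta hq hq1
  simp only [Finset.sum_range_succ, Finset.sum_range_zero, thetaTerm, tri, Nat.cast_ofNat,
    Nat.cast_zero, Nat.cast_one, Int.reduceAdd, Int.reduceSub, Int.reduceMul, Int.reduceNeg,
    Int.reduceDiv, ← hrefl 2, ← hrefl 4, ← hrefl 5,
    alternatingTheta_zero hq hq1 (m := 5) (by norm_num), hinv, zpow_ofNat] at h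
  simp only [← sub_eq_add_neg] at h
  field_simp at h
  linear_combination -h / 2

end Wronskian

section EtaIdentities

variable {𝕜 : Type*} [NormedField 𝕜] {q : 𝕜}

theorem alternatingTheta_sq_five_one (q : 𝕜) :
    alternatingTheta (q ^ 2) 5 1 = alternatingTheta q 10 2 :=
  alternatingTheta_pow q 2 5 1

theorem alternatingTheta_sq_five_three (hq : q ≠ 0) :
    alternatingTheta (q ^ 2) 5 3 = alternatingTheta q 10 4 :=
  (alternatingTheta_pow q 2 5 3).trans (alternatingTheta_sub hq 10 4)

variable [CompleteSpace 𝕜]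

theorem eulerProduct_pow_five_sq (hq : q ≠ 0) (hq1 : ‖q‖ < 1) :
    eulerProduct (q ^ 5) ^ 2 = alternatingTheta q 10 5 * eulerProduct (q ^ 10) := by
  have h := eulerProduct_sq (pow_ne_zero 5 hq) (q := q ^ 5)
    (by simpa using pow_lt_one₀ (norm_nonneg q) hq1 (by norm_num))
  simpa only [alternatingTheta_pow, ← pow_mul, Nat.reduceMul, Nat.cast_ofNat, mul_one] using h

theorem eulerProduct_pow_two_mul_eulerProduct_pow_ten (hq : q ≠ 0) (hq1 : ‖q‖ < 1) :
    eulerProduct (q ^ 2) * eulerProduct (q ^ 10) =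
      alternatingTheta q 10 2 * alternatingTheta q 10 4 := by
  have h := eulerProduct_mul_eulerProduct_pow_five (pow_ne_zero 2 hq) (q := q ^ 2)
    (by simpa using pow_lt_one₀ (norm_nonneg q) hq1 two_ne_zero)
  rwa [alternatingTheta_sq_five_one, alternatingTheta_sq_five_three hq, ← pow_mul] at h

theorem alternatingTheta_five_mul_eulerProduct_sq (hq : q ≠ 0) (hq1 : ‖q‖ < 1) :
    alternatingTheta q 5 1 * eulerProduct (q ^ 10) ^ 2 =
        eulerProduct (q ^ 5) * (alternatingTheta q 10 1 * alternatingTheta q 10 4) ∧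
      alternatingTheta q 5 3 * eulerProduct (q ^ 10) ^ 2 =
        eulerProduct (q ^ 5) * (alternatingTheta q 10 3 * alternatingTheta q 10 2) := by
  have h1 := alternatingTheta_mul_eulerProduct_sq hq hq1 (m := 5) (i := 1) (by norm_num)
    (by norm_num)
  have h3 := alternatingTheta_mul_eulerProduct_sq hq hq1 (m := 5) (i := 3) (by norm_num)
    (by norm_num)
  exact ⟨by simpa using h1, by simpa using h3⟩

theorem alternatingTheta_ten_one_mul_three (hq : q ≠ 0) (hq1 : ‖q‖ < 1) :
    eulerProduct (q ^ 2) * eulerProduct (q ^ 5) *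
        (alternatingTheta q 10 1 * alternatingTheta q 10 3) =
      eulerProduct q * eulerProduct (q ^ 10) ^ 3 := by
  have hne5 := eulerProduct_pow_ne_zero hq1 (k := 5) (by norm_num)
  have hne10 := eulerProduct_pow_ne_zero hq1 (k := 10) (by norm_num)
  obtain ⟨h1, h3⟩ := alternatingTheta_five_mul_eulerProduct_sq hq hq1
  have h5 := eulerProduct_mul_eulerProduct_pow_five hq hq1
  have h10 := eulerProduct_pow_two_mul_eulerProduct_pow_ten hq hq1
  refine mul_left_cancel₀ (mul_ne_zero hne5 hne10) ?_
  linear_combination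
    eulerProduct (q ^ 5) ^ 2 * (alternatingTheta q 10 1 * alternatingTheta q 10 3) * h10 -
      eulerProduct (q ^ 10) ^ 4 * h5 -
      alternatingTheta q 5 3 * eulerProduct (q ^ 10) ^ 2 * h1 -
      eulerProduct (q ^ 5) * (alternatingTheta q 10 1 * alternatingTheta q 10 4) * h3

theorem eulerProduct_pow_four_mul_eq_sub (hq : q ≠ 0) (hq1 : ‖q‖ < 1) :
    eulerProduct q ^ 4 * eulerProduct (q ^ 5) * eulerProduct (q ^ 10) ^ 2 =
      eulerProduct (q ^ 2) ^ 2 * eulerProduct (q ^ 5) ^ 5 -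
        4 * q * eulerProduct q * eulerProduct (q ^ 2) * eulerProduct (q ^ 10) ^ 5 := by
  have h2 := eulerProduct_sq hq hq1
  have h5 := eulerProduct_pow_five_sq hq hq1
  have h13 := alternatingTheta_ten_one_mul_three hq hq1
  have htwo := alternatingTheta_two_sq hq hq1
  linear_combination
    (eulerProduct q ^ 2 + alternatingTheta q 2 1 * eulerProduct (q ^ 2)) *
        eulerProduct (q ^ 5) * eulerProduct (q ^ 10) ^ 2 * h2 +
      eulerProduct (q ^ 2) ^ 2 * eulerProduct (q ^ 5) * eulerProduct (q ^ 10) ^ 2 * htwo -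
      (eulerProduct (q ^ 5) ^ 2 + alternatingTheta q 10 5 * eulerProduct (q ^ 10)) *
        eulerProduct (q ^ 2) ^ 2 * eulerProduct (q ^ 5) * h5 -
      4 * q * eulerProduct (q ^ 2) * eulerProduct (q ^ 10) ^ 2 * h13

theorem eulerProduct_pow_two_pow_four_mul_eq_add (hq : q ≠ 0) (hq1 : ‖q‖ < 1) :
    eulerProduct (q ^ 2) ^ 4 * eulerProduct (q ^ 5) ^ 2 * eulerProduct (q ^ 10) =
      eulerProduct q * eulerProduct (q ^ 2) * eulerProduct (q ^ 5) ^ 5 +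
        q * eulerProduct q ^ 2 * eulerProduct (q ^ 10) ^ 5 := by
  have hne10 := eulerProduct_pow_ne_zero hq1 (k := 10) (by norm_num)
  have h5 := eulerProduct_pow_five_sq hq hq1
  have h10 := eulerProduct_pow_two_mul_eulerProduct_pow_ten hq hq1
  have h13 := alternatingTheta_ten_one_mul_three hq hq1
  have h24 := alternatingTheta_ten_three_term_two_four hq hq1
  set P := alternatingTheta q 10 1 * alternatingTheta q 10 3
  refine mul_left_cancel₀ hne10 ?_
  linear_combination
    (eulerProduct (q ^ 2) * eulerProduct (q ^ 10) +
        alternatingTheta q 10 2 * alternatingTheta q 10 4) *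
        eulerProduct (q ^ 2) ^ 2 * eulerProduct (q ^ 5) ^ 2 * h10 +
      eulerProduct (q ^ 2) ^ 2 * eulerProduct (q ^ 5) ^ 2 * h24 +
      (q * (eulerProduct (q ^ 2) * eulerProduct (q ^ 5) * P +
        eulerProduct q * eulerProduct (q ^ 10) ^ 3) +
        alternatingTheta q 10 5 ^ 2 * eulerProduct (q ^ 2) * eulerProduct (q ^ 5)) * h13 -
      (eulerProduct (q ^ 5) ^ 2 + alternatingTheta q 10 5 * eulerProduct (q ^ 10)) *
        eulerProduct q * eulerProduct (q ^ 2) * eulerProduct (q ^ 5) * eulerProduct (q ^ 10) * h5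

theorem alternatingTheta_five_sq_sub_sq (hq : q ≠ 0) (hq1 : ‖q‖ < 1) :
    ((alternatingTheta q 5 3 * alternatingTheta (q ^ 2) 5 3 ^ 2) ^ 2 -
        (q * alternatingTheta q 5 1 * alternatingTheta (q ^ 2) 5 1 ^ 2) ^ 2) *
        eulerProduct (q ^ 10) ^ 3 =
      eulerProduct (q ^ 2) ^ 3 * eulerProduct (q ^ 5) ^ 6 := by
  have hne10 := eulerProduct_pow_ne_zero hq1 (k := 10) (by norm_num)
  obtain ⟨h1, h3⟩ := alternatingTheta_five_mul_eulerProduct_sq hq hq1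
  have h5 := eulerProduct_pow_five_sq hq hq1
  have h10 := eulerProduct_pow_two_mul_eulerProduct_pow_ten hq hq1
  have h34 := alternatingTheta_ten_three_term_three_four hq hq1
  rw [alternatingTheta_sq_five_one, alternatingTheta_sq_five_three hq]
  refine mul_left_cancel₀ hne10 ?_
  set T2 := alternatingTheta q 10 2
  set T4 := alternatingTheta q 10 4
  set T5 := alternatingTheta q 10 5
  set E2 := eulerProduct (q ^ 2)
  set E5 := eulerProduct (q ^ 5)
  set E10 := eulerProduct (q ^ 10)
  calc E10 * (((alternatingTheta q 5 3 * T4 ^ 2) ^ 2 -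
        (q * alternatingTheta q 5 1 * T2 ^ 2) ^ 2) * E10 ^ 3)
      = (alternatingTheta q 5 3 * E10 ^ 2) ^ 2 * T4 ^ 4 -
          q ^ 2 * (alternatingTheta q 5 1 * E10 ^ 2) ^ 2 * T2 ^ 4 := by ring
    _ = E5 ^ 2 * (T2 * T4) ^ 2 * (T2 * T4 * T5 ^ 2) := by
      rw [h1, h3, ← h34]
      ring
    _ = E2 ^ 3 * E10 * E5 ^ 2 * (T5 * E10) ^ 2 := by
      rw [← h10]
      ring
    _ = E10 * (E2 ^ 3 * E5 ^ 6) := by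
      rw [← h5]
      ring

end EtaIdentities

section QExpansion

open PowerSeries

variable {R : Type*} [CommRing R] [Algebra R ℂ] {f g : ℂ → ℂ} {A B : R⟦X⟧}

/-- The power series `A` converges to `f` on the punctured unit disc. The centre is left out because
`alternatingTheta` is only controlled at nonzero nomes. -/
def HasQExpansion (f : ℂ → ℂ) (A : R⟦X⟧) : Prop :=
  ∀ z : ℂ, z ≠ 0 → ‖z‖ < 1 → HasSum (fun n => algebraMap R ℂ (coeff n A) * z ^ n) (f z)

namespace HasQExpansion

theorem congr (hf : HasQExpansion f A) (hfg : ∀ z, z ≠ 0 → ‖z‖ < 1 → f z = g z) :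
    HasQExpansion g A := fun z hz hz1 => hfg z hz hz1 ▸ hf z hz hz1

theorem map (hf : HasQExpansion f A) : HasQExpansion f (A.map (algebraMap R ℂ)) := by
  simpa only [HasQExpansion, coeff_map, Algebra.algebraMap_self, RingHom.id_apply] using hf

theorem add (hf : HasQExpansion f A) (hg : HasQExpansion g B) :
    HasQExpansion (fun z => f z + g z) (A + B) := fun z hz hz1 => by
  simpa only [map_add, add_mul] using (hf z hz hz1).add (hg z hz hz1)

theorem sub (hf : HasQExpansion f A) (hg : HasQExpansion g B) :
    HasQExpansion (fun z => f z - g z) (A - B) := fun z hz hz1 => by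
  simpa only [map_sub, sub_mul] using (hf z hz hz1).sub (hg z hz hz1)

theorem mul (hf : HasQExpansion f A) (hg : HasQExpansion g B) :
    HasQExpansion (fun z => f z * g z) (A * B) := fun z hz hz1 => by
  have hA := hf z hz hz1
  have hB := hg z hz hz1
  have h := (summable_norm_sum_mul_antidiagonal_of_summable_norm hA.summable.norm
    hB.summable.norm).of_norm.hasSum
  rw [← tsum_mul_tsum_eq_tsum_sum_antidiagonal_of_summable_norm hA.summable.norm
    hB.summable.norm, hA.tsum_eq, hB.tsum_eq] at h
  refine h.congr_fun fun n => ?_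
  rw [coeff_mul, map_sum, Finset.sum_mul]
  refine Finset.sum_congr rfl fun p hp => ?_
  rw [← Finset.HasAntidiagonal.mem_antidiagonal.mp hp, map_mul, pow_add]
  ring

theorem const (c : R) : HasQExpansion (fun _ => algebraMap R ℂ c) (C c) := fun z _ _ => by
  convert hasSum_single 0 fun n hn => ?_ using 1 <;> simp_all [coeff_C]

theorem X : HasQExpansion (fun z => z) (X : R⟦X⟧) := fun z _ _ => by
  convert hasSum_single 1 fun n hn => ?_ using 1 <;> simp_all [coeff_X]

theorem pow (hf : HasQExpansion f A) (k : ℕ) : HasQExpansion (fun z => f z ^ k) (A ^ k) := by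
  induction k with
  | zero => simpa using const (R := R) 1
  | succ k ih => simpa only [pow_succ] using ih.mul hf

theorem expand (hf : HasQExpansion f A) {k : ℕ} (hk : k ≠ 0) :
    HasQExpansion (fun z => f (z ^ k)) (A.expand k hk) := fun z hz hz1 => by
  have hzk : ‖z ^ k‖ < 1 := by simpa using pow_lt_one₀ (norm_nonneg z) hz1 hk
  refine (Function.Injective.hasSum_iff (mul_right_injective₀ hk) fun n hn => ?_).mp ?_
  · have hkn : ¬ k ∣ n := fun ⟨m, hm⟩ => hn ⟨m, hm.symm⟩
    rw [coeff_expand_of_not_dvd k hk A hkn, map_zero, zero_mul]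
  · refine (hf _ (pow_ne_zero k hz) hzk).congr_fun fun n => ?_
    simp only [Function.comp_apply, coeff_expand_mul, pow_mul]

theorem hasFPowerSeriesOnBall (hf : HasQExpansion f A) :
    HasFPowerSeriesOnBall (Function.update f 0 (algebraMap R ℂ (constantCoeff A)))
      (.ofScalars ℂ fun n => algebraMap R ℂ (coeff n A)) 0 1 where
  r_le := by
    refine le_of_forall_lt_imp_le_of_dense fun r hr => ?_
    lift r to NNReal using hr.ne_top
    rcases eq_or_ne r 0 with rfl | hr0
    · simp
    refine FormalMultilinearSeries.le_radius_of_summable _ ?_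
    simpa using (hf r (mod_cast hr0) (by simpa using hr)).summable.norm
  r_pos := one_pos
  hasSum := by
    intro z hz
    rw [← ENNReal.coe_one, Metric.eball_coe, NNReal.coe_one, mem_ball_zero_iff] at hz
    rcases eq_or_ne z 0 with rfl | hz0
    · simpa +contextual [zero_pow_eq] using hasSum_ite_eq 0 (algebraMap R ℂ (constantCoeff A))
    · simpa [Function.update_of_ne hz0, mul_comm] using hf z hz0 hz

variable [FaithfulSMul R ℂ]

theorem unique (hA : HasQExpansion f A) (hB : HasQExpansion f B) : A = B := by
  have hA' := hA.hasFPowerSeriesOnBall.hasFPowerSeriesAt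
  have hB' := hB.hasFPowerSeriesOnBall.hasFPowerSeriesAt
  have hEq : ∀ᶠ z in 𝓝[≠] 0, Function.update f 0 (algebraMap R ℂ (constantCoeff A)) z =
      Function.update f 0 (algebraMap R ℂ (constantCoeff B)) z := by
    filter_upwards [self_mem_nhdsWithin] with z hz
    rw [Function.update_of_ne hz, Function.update_of_ne hz]
  have hseries := hA'.eq_formalMultilinearSeries_of_eventually hB'
    ((hA'.continuousAt.eventuallyEq_nhds_iff_eventuallyEq_nhdsNE hB'.continuousAt).mp hEq)
  ext n
  exact FaithfulSMul.algebraMap_injective R ℂ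
    (congrFun (FormalMultilinearSeries.ofScalars_series_injective ℂ ℂ hseries) n)

theorem exists_div (hf : HasQExpansion f A) (hg : HasQExpansion g B)
    (hg0 : ∀ z, z ≠ 0 → ‖z‖ < 1 → g z ≠ 0) (hB : constantCoeff B ≠ 0) :
    ∃ T : ℂ⟦X⟧, HasQExpansion (fun z => f z / g z) T := by
  set f₀ := Function.update f 0 (algebraMap R ℂ (constantCoeff A))
  set g₀ := Function.update g 0 (algebraMap R ℂ (constantCoeff B))
  have hg₀ (z : ℂ) (hz : z ∈ Metric.ball 0 1) : g₀ z ≠ 0 := by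
    rcases eq_or_ne z 0 with rfl | hz0
    · simpa [g₀] using (map_ne_zero_iff _ (FaithfulSMul.algebraMap_injective R ℂ)).mpr hB
    · simpa [g₀, Function.update_of_ne hz0] using hg0 z hz0 (mem_ball_zero_iff.mp hz)
  have hball : Metric.eball (0 : ℂ) 1 = Metric.ball 0 1 := by
    rw [← ENNReal.coe_one, Metric.eball_coe, NNReal.coe_one]
  have hdf := hf.hasFPowerSeriesOnBall.differentiableOn
  have hdg := hg.hasFPowerSeriesOnBall.differentiableOn
  rw [hball] at hdf hdg
  refine ⟨mk fun n => (n.factorial : ℂ)⁻¹ * iteratedDeriv n (f₀ / g₀) 0,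
    fun z hz hz1 => ?_⟩
  have h := Complex.hasSum_taylorSeries_on_ball (hdf.div hdg hg₀) (mem_ball_zero_iff.mpr hz1)
  simp only [Pi.div_apply, Function.update_of_ne hz, sub_zero, smul_eq_mul] at h
  refine h.congr_fun fun n => ?_
  rw [coeff_mk, Algebra.algebraMap_self, RingHom.id_apply, mul_right_comm, mul_assoc]

theorem div {D : R⟦X⟧} (hf : HasQExpansion f A) (hg : HasQExpansion g B)
    (hg0 : ∀ z, z ≠ 0 → ‖z‖ < 1 → g z ≠ 0) (hB : constantCoeff B ≠ 0) (hD : D * B = A) :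
    HasQExpansion (fun z => f z / g z) D := by
  obtain ⟨T, hT⟩ := hf.exists_div hg hg0 hB
  have hTB : HasQExpansion f (T * B.map (algebraMap R ℂ)) :=
    (hT.mul hg.map).congr fun z hz hz1 => div_mul_cancel₀ _ (hg0 z hz hz1)
  have hB' : B.map (algebraMap R ℂ) ≠ 0 := by
    refine (map_ne_zero_iff _
      (PowerSeries.map_injective _ (FaithfulSMul.algebraMap_injective R ℂ))).mpr ?_
    rintro rfl
    exact hB (map_zero _)
  have hTD : T = D.map (algebraMap R ℂ) := by
    refine mul_right_cancel₀ hB' ?_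
    rw [hTB.unique hf.map, ← map_mul, hD]
  simpa only [HasQExpansion, hTD, coeff_map, Algebra.algebraMap_self, RingHom.id_apply] using hT

end HasQExpansion

end QExpansion

section ThetaSeries

open PowerSeries

/-- The exponent `m * i (i - 1) / 2 + j * i` of `q` in the `i`-th term of
`alternatingTheta q m j`. -/
def thetaExponent (m j : ℕ) (i : ℤ) : ℤ := m * tri i + j * i

theorem tri_nonneg (i : ℤ) : 0 ≤ tri i := by
  refine Int.ediv_nonneg ?_ zero_le_two
  rcases le_or_gt i 0 with hi | hi
  · exact mul_nonneg_of_nonpos_of_nonpos hi (by omega)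
  · exact mul_nonneg hi.le (by omega)

theorem abs_le_thetaExponent {m j : ℕ} (hj : 0 < j) (hjm : j < m) (i : ℤ) :
    |i| ≤ thetaExponent m j i := by
  have hj_one : (1 : ℤ) ≤ j := mod_cast hj
  have hjm_one : (j : ℤ) + 1 ≤ m := mod_cast hjm
  rw [thetaExponent]
  rcases le_total 0 i with hi | hi
  · have htri := tri_nonneg i
    rw [abs_of_nonneg hi]
    nlinarith only [htri, hi, hj_one, hjm_one]
  · have htri := tri_nonneg (-i)
    rw [tri_neg] at htri
    rw [abs_of_nonpos hi]
    nlinarith only [htri, hi, hj_one, hjm_one]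

theorem thetaTerm_eq_negOnePow_mul_zpow {𝕜 : Type*} [NormedField 𝕜] {q : 𝕜} (hq : q ≠ 0)
    (m j : ℕ) (i : ℤ) :
    thetaTerm (q ^ m) (-q ^ (j : ℤ)) i = (i.negOnePow : ℤ) * q ^ thetaExponent m j i := by
  rw [thetaTerm, thetaExponent, zpow_add₀ hq, zpow_mul, zpow_mul, zpow_natCast, zpow_natCast,
    neg_eq_neg_one_mul, mul_zpow, Int.cast_negOnePow]
  ring

/-- The formal power series in `q` of `weightedTheta w q m j`. The range `|i| ≤ n` loses no term of
exponent `n` when `0 < j < m`, by `abs_le_thetaExponent`. -/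
noncomputable def thetaSeries (w : ℤ → ℤ) (m j : ℕ) : ℤ⟦X⟧ :=
  PowerSeries.mk fun n =>
    ∑ i ∈ Finset.Icc (-n : ℤ) n with thetaExponent m j i = n, w i * i.negOnePow

theorem coeff_thetaSeries (w : ℤ → ℤ) (m j n : ℕ) : coeff n (thetaSeries w m j) =
    ∑ i ∈ Finset.Icc (-n : ℤ) n with thetaExponent m j i = n, w i * i.negOnePow :=
  coeff_mk _ _

theorem hasQExpansion_weightedTheta {w : ℤ → ℤ} {m j : ℕ} (hj : 0 < j) (hjm : j < m)
    (hw : ∀ z : ℂ, z ≠ 0 → ‖z‖ < 1 →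
      Summable fun i => (w i : ℂ) * thetaTerm (z ^ m) (-z ^ (j : ℤ)) i) :
    HasQExpansion (fun z => weightedTheta w z m j) (thetaSeries w m j) := fun z hz hz1 => by
  have hnonneg (i : ℤ) : 0 ≤ thetaExponent m j i :=
    (abs_nonneg i).trans (abs_le_thetaExponent hj hjm i)
  have hfiber (n : ℕ) : (fun i => (thetaExponent m j i).toNat) ⁻¹' {n} =
      ↑{i ∈ Finset.Icc (-n : ℤ) n | thetaExponent m j i = n} := by
    ext i
    have := abs_le.mp (abs_le_thetaExponent hj hjm i)
    have := hnonneg i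
    simp only [Set.mem_preimage, Set.mem_singleton_iff, Finset.coe_filter, Finset.mem_Icc,
      Set.mem_ofPred_eq]
    omega
  refine ((hw z hz hz1).hasSum.tsum_fiberwise fun i => (thetaExponent m j i).toNat).congr_fun
    fun n => ?_
  rw [hfiber, Finset.tsum_subtype' _ fun i : ℤ => (w i : ℂ) * thetaTerm (z ^ m) (-z ^ (j : ℤ)) i,
    coeff_thetaSeries, eq_intCast, Int.cast_sum, Finset.sum_mul]
  refine Finset.sum_congr rfl fun i hi => ?_
  rw [thetaTerm_eq_negOnePow_mul_zpow hz, (Finset.mem_filter.mp hi).2, zpow_natCast, Int.cast_mul,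
    mul_assoc]

theorem hasQExpansion_weightedTheta_sq (a b : ℤ) {m j : ℕ} (hj : 0 < j) (hjm : j < m) :
    HasQExpansion (fun z => weightedTheta (fun i => (a * i + b) ^ 2) z m j)
      (thetaSeries (fun i => (a * i + b) ^ 2) m j) := by
  refine hasQExpansion_weightedTheta hj hjm fun z hz hz1 => ?_
  have hzm : ‖z ^ m‖ < 1 := by simpa using pow_lt_one₀ (norm_nonneg z) hz1 (by omega)
  have hmoment (k : ℕ) := (summable_norm_pow_mul_thetaTerm k (pow_ne_zero m hz) hzm
    (neg_ne_zero.mpr (zpow_ne_zero j hz))).of_norm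
  refine ((((hmoment 2).mul_left (a ^ 2 : ℂ)).add ((hmoment 1).mul_left (2 * a * b : ℂ))).add
    ((hmoment 0).mul_left (b ^ 2 : ℂ))).congr fun i => ?_
  push_cast
  ring

theorem hasQExpansion_alternatingTheta {m j : ℕ} (hj : 0 < j) (hjm : j < m) :
    HasQExpansion (fun z => alternatingTheta z m j) (thetaSeries 1 m j) := by
  have h := hasQExpansion_weightedTheta_sq 0 1 hj hjm
  simp only [weightedTheta, zero_mul, zero_add, one_pow, Int.cast_one, one_mul] at h
  exact h

end ThetaSeries

section EulerDerivation

open PowerSeries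

theorem derivation_mul_sq_of_mul_eq {R A : Type*} [CommRing R] [CommRing A] [Algebra R A]
    (D : Derivation R A A) {a b g : A}
    (hg : g * (b ^ 2 - 4 * a * b - a ^ 2) = 2 * a * b + a ^ 2) :
    D g * (b ^ 2 - 4 * a * b - a ^ 2) ^ 2 =
      2 * (b * D a - a * D b) * (b ^ 2 + a * b - a ^ 2) := by
  -- For `k = a / b`, `d/dk ((2k + k²) / (1 - 4k - k²)) = 2 (1 + k - k²) / (1 - 4k - k²)²`.
  have h := congrArg D hg
  have htwo : D 2 = 0 := mod_cast D.map_natCast 2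
  have hfour : D 4 = 0 := mod_cast D.map_natCast 4
  simp only [map_add, map_sub, Derivation.leibniz, Derivation.leibniz_pow, smul_eq_mul,
    nsmul_eq_mul, htwo, hfour] at h
  push_cast at h
  linear_combination (b ^ 2 - 4 * a * b - a ^ 2) * h -
    (2 * b * D b - 4 * (a * D b + b * D a) - 2 * a * D a) * hg

/-- The derivation `q d/dq` of formal power series. -/
noncomputable def eulerDerivation (R : Type*) [CommRing R] : Derivation R R⟦X⟧ R⟦X⟧ :=
  (X : R⟦X⟧) • derivative R

theorem coeff_eulerDerivation {R : Type*} [CommRing R] (A : R⟦X⟧) (n : ℕ) :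
    coeff n (eulerDerivation R A) = n * coeff n A := by
  cases n with
  | zero => simp [eulerDerivation]
  | succ n => simp [eulerDerivation, coeff_succ_X_mul, coeff_derivative, mul_comm]

theorem eulerDerivation_X (R : Type*) [CommRing R] : eulerDerivation R X = X := by
  simp [eulerDerivation]

theorem eulerDerivation_expand {R : Type*} [CommRing R] (A : R⟦X⟧) {k : ℕ} (hk : k ≠ 0) :
    eulerDerivation R (A.expand k hk) = k * (eulerDerivation R A).expand k hk := by
  ext n
  rw [coeff_eulerDerivation, ← map_natCast (C (R := R)), coeff_C_mul]
  by_cases hkn : k ∣ n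
  · obtain ⟨m, rfl⟩ := hkn
    rw [coeff_expand_mul, coeff_expand_mul, coeff_eulerDerivation, Nat.cast_mul, mul_assoc]
  · rw [coeff_expand_of_not_dvd k hk _ hkn, coeff_expand_of_not_dvd k hk _ hkn, mul_zero, mul_zero]

theorem thetaSeries_mul_thetaExponent_add (a c : ℤ) (m j : ℕ) :
    thetaSeries (fun i => a * thetaExponent m j i + c) m j =
      C a * eulerDerivation ℤ (thetaSeries 1 m j) + C c * thetaSeries 1 m j := by
  ext n
  simp only [map_add, coeff_C_mul, coeff_eulerDerivation, coeff_thetaSeries, Finset.mul_sum,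
    ← Finset.sum_add_distrib]
  refine Finset.sum_congr rfl fun i hi => ?_
  rw [(Finset.mem_filter.mp hi).2, Pi.one_apply]
  ring

end EulerDerivation

section LevelTenSeries

open PowerSeries

/-- The power series of `E(q ^ k)`, via the pentagonal number theorem. -/
noncomputable def eulerSeries (k : ℕ) [NeZero k] : ℤ⟦X⟧ :=
  (thetaSeries 1 3 1).expand k (NeZero.ne k)

/-- The power series of `alternatingTheta (q ^ k) 5 j`. -/
noncomputable def quinticSeries (j k : ℕ) [NeZero k] : ℤ⟦X⟧ :=
  (thetaSeries 1 5 j).expand k (NeZero.ne k)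

theorem hasQExpansion_eulerSeries (k : ℕ) [NeZero k] :
    HasQExpansion (fun z => eulerProduct (z ^ k)) (eulerSeries k) :=
  (((hasQExpansion_alternatingTheta (m := 3) (j := 1) (by norm_num) (by norm_num)).congr
    (g := eulerProduct) fun _ hz hz1 => (eulerProduct_eq_alternatingTheta hz hz1).symm).expand
    (NeZero.ne k))

theorem hasQExpansion_quinticSeries {j : ℕ} (hj : 0 < j) (hj5 : j < 5) (k : ℕ) [NeZero k] :
    HasQExpansion (fun z => alternatingTheta (z ^ k) 5 j) (quinticSeries j k) :=
  (hasQExpansion_alternatingTheta hj hj5).expand (NeZero.ne k)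

theorem hasQExpansion_eulerSeries_one : HasQExpansion eulerProduct (eulerSeries 1) := by
  simpa only [pow_one] using hasQExpansion_eulerSeries 1

theorem hasQExpansion_quinticSeries_one {j : ℕ} (hj : 0 < j) (hj5 : j < 5) :
    HasQExpansion (fun z => alternatingTheta z 5 j) (quinticSeries j 1) := by
  simpa only [pow_one] using hasQExpansion_quinticSeries hj hj5 1

theorem constantCoeff_eulerSeries (k : ℕ) [NeZero k] : constantCoeff (eulerSeries k) = 1 := by
  rw [eulerSeries, constantCoeff_expand, ← coeff_zero_eq_constantCoeff_apply, coeff_thetaSeries]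
  decide

theorem constantCoeff_quinticSeries (j k : ℕ) [NeZero k] :
    constantCoeff (quinticSeries j k) = 1 := by
  rw [quinticSeries, constantCoeff_expand, ← coeff_zero_eq_constantCoeff_apply, coeff_thetaSeries]
  simp [Finset.sum_filter, thetaExponent, tri]

theorem eulerSeries_ne_zero (k : ℕ) [NeZero k] : eulerSeries k ≠ 0 := fun h => by
  simpa [h] using constantCoeff_eulerSeries k

theorem quinticSeries_mul_quinticSeries :
    quinticSeries 1 1 * quinticSeries 3 1 = eulerSeries 1 * eulerSeries 5 := by
  refine ((hasQExpansion_quinticSeries_one (by norm_num) (by norm_num)).mul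
    (hasQExpansion_quinticSeries_one (by norm_num) (by norm_num))).unique
    ((hasQExpansion_eulerSeries_one.mul (hasQExpansion_eulerSeries 5)).congr fun z hz hz1 => ?_)
  simpa using eulerProduct_mul_eulerProduct_pow_five hz hz1

theorem expand_two_eulerSeries (k : ℕ) [NeZero k] :
    (eulerSeries k).expand 2 two_ne_zero = eulerSeries (2 * k) :=
  (expand_mul 2 two_ne_zero k (NeZero.ne k) _).symm

theorem expand_two_quinticSeries (j k : ℕ) [NeZero k] :
    (quinticSeries j k).expand 2 two_ne_zero = quinticSeries j (2 * k) :=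
  (expand_mul 2 two_ne_zero k (NeZero.ne k) _).symm

theorem quinticSeries_two_mul_quinticSeries_two :
    quinticSeries 1 2 * quinticSeries 3 2 = eulerSeries 2 * eulerSeries 10 := by
  have h := congrArg (PowerSeries.expand 2 two_ne_zero) quinticSeries_mul_quinticSeries
  simpa only [map_mul, expand_two_eulerSeries, expand_two_quinticSeries] using h

theorem thetaSeries_five_one :
    thetaSeries (fun i => (10 * i + -3) ^ 2) 5 1 =
      C 40 * eulerDerivation ℤ (quinticSeries 1 1) + C 9 * quinticSeries 1 1 := by
  rw [quinticSeries, expand_one_apply, ← thetaSeries_mul_thetaExponent_add]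
  congr 1
  funext i
  rw [thetaExponent]
  linear_combination (-100) * two_mul_tri i

theorem thetaSeries_five_three :
    thetaSeries (fun i => (10 * i + 1) ^ 2) 5 3 =
      C 40 * eulerDerivation ℤ (quinticSeries 3 1) + C 1 * quinticSeries 3 1 := by
  rw [quinticSeries, expand_one_apply, ← thetaSeries_mul_thetaExponent_add]
  congr 1
  funext i
  rw [thetaExponent]
  linear_combination (-100) * two_mul_tri i

theorem quinticSeries_mul_thetaSeries_sub :
    quinticSeries 3 1 * thetaSeries (fun i => (10 * i + -3) ^ 2) 5 1 -
      quinticSeries 1 1 * thetaSeries (fun i => (10 * i + 1) ^ 2) 5 3 =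
        C 8 * eulerSeries 1 ^ 6 := by
  have hN := hasQExpansion_quinticSeries_one (j := 1) (by norm_num) (by norm_num)
  have hM := hasQExpansion_quinticSeries_one (j := 3) (by norm_num) (by norm_num)
  refine ((hM.mul (hasQExpansion_weightedTheta_sq 10 (-3) (by norm_num) (by norm_num))).sub
    (hN.mul (hasQExpansion_weightedTheta_sq 10 1 (by norm_num) (by norm_num)))).unique
    (((HasQExpansion.const 8).mul (hasQExpansion_eulerSeries_one.pow 6)).congr fun z hz hz1 => ?_)
  simpa [sub_eq_add_neg] using (alternatingTheta_mul_weightedTheta_sub hz hz1).symm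

theorem quinticSeries_wronskian :
    quinticSeries 1 1 * quinticSeries 3 1 +
      5 * (quinticSeries 3 1 * eulerDerivation ℤ (quinticSeries 1 1) -
        quinticSeries 1 1 * eulerDerivation ℤ (quinticSeries 3 1)) = eulerSeries 1 ^ 6 := by
  have h := quinticSeries_mul_thetaSeries_sub
  rw [thetaSeries_five_one, thetaSeries_five_three] at h
  simp only [map_ofNat, map_one] at h
  have h8 : C (8 : ℤ) ≠ 0 := (map_ne_zero_iff C C_injective).mpr (by norm_num)
  refine mul_left_cancel₀ h8 ?_
  rw [map_ofNat]
  linear_combination h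

theorem quinticSeries_two_wronskian :
    2 * (quinticSeries 1 2 * quinticSeries 3 2) +
      5 * (quinticSeries 3 2 * eulerDerivation ℤ (quinticSeries 1 2) -
        quinticSeries 1 2 * eulerDerivation ℤ (quinticSeries 3 2)) = 2 * eulerSeries 2 ^ 6 := by
  have hderiv (j : ℕ) : eulerDerivation ℤ (quinticSeries j 2) =
      2 * (eulerDerivation ℤ (quinticSeries j 1)).expand 2 two_ne_zero := by
    simpa only [expand_two_quinticSeries, Nat.cast_ofNat] using
      eulerDerivation_expand (quinticSeries j 1) two_ne_zero
  have h := congrArg (PowerSeries.expand 2 two_ne_zero) quinticSeries_wronskian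
  simp only [map_mul, map_add, map_sub, map_pow, map_ofNat, expand_two_eulerSeries,
    expand_two_quinticSeries] at h
  linear_combination 2 * h +
    5 * quinticSeries 3 2 * hderiv 1 - 5 * quinticSeries 1 2 * hderiv 3

theorem eulerSeries_pow_four_mul_eq_sub :
    eulerSeries 1 ^ 4 * eulerSeries 5 * eulerSeries 10 ^ 2 =
      eulerSeries 2 ^ 2 * eulerSeries 5 ^ 5 -
        C 4 * X * eulerSeries 1 * eulerSeries 2 * eulerSeries 10 ^ 5 := by
  have h1 := hasQExpansion_eulerSeries_one
  have h2 := hasQExpansion_eulerSeries 2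
  have h5 := hasQExpansion_eulerSeries 5
  have h10 := hasQExpansion_eulerSeries 10
  refine (((h1.pow 4).mul h5).mul (h10.pow 2)).unique
    (HasQExpansion.congr (((h2.pow 2).mul (h5.pow 5)).sub
      (((((HasQExpansion.const 4).mul .X).mul h1).mul h2).mul (h10.pow 5))) fun z hz hz1 => ?_)
  simpa using (eulerProduct_pow_four_mul_eq_sub hz hz1).symm

theorem eulerSeries_two_pow_four_mul_eq_add :
    eulerSeries 2 ^ 4 * eulerSeries 5 ^ 2 * eulerSeries 10 =
      eulerSeries 1 * eulerSeries 2 * eulerSeries 5 ^ 5 +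
        X * eulerSeries 1 ^ 2 * eulerSeries 10 ^ 5 := by
  have h1 := hasQExpansion_eulerSeries_one
  have h2 := hasQExpansion_eulerSeries 2
  have h5 := hasQExpansion_eulerSeries 5
  have h10 := hasQExpansion_eulerSeries 10
  refine (((h2.pow 4).mul (h5.pow 2)).mul h10).unique (HasQExpansion.congr
    (((h1.mul h2).mul (h5.pow 5)).add ((HasQExpansion.X.mul (h1.pow 2)).mul (h10.pow 5)))
    fun z hz hz1 => ?_)
  exact (eulerProduct_pow_two_pow_four_mul_eq_add hz hz1).symm

/-- The numerator `q A(q; 5, 1) A(q²; 5, 1)²` of Ramanujan's parameter `k = r(q) r(q²)²`, where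
`r` is the Rogers–Ramanujan continued fraction and `A` is `alternatingTheta`. -/
noncomputable def ramanujanNum : ℤ⟦X⟧ := X * quinticSeries 1 1 * quinticSeries 1 2 ^ 2

/-- The denominator `A(q; 5, 3) A(q²; 5, 3)²` of Ramanujan's parameter `k`. -/
noncomputable def ramanujanDen : ℤ⟦X⟧ := quinticSeries 3 1 * quinticSeries 3 2 ^ 2

theorem ramanujanNum_mul_ramanujanDen : ramanujanNum * ramanujanDen =
    X * eulerSeries 1 * eulerSeries 2 ^ 2 * eulerSeries 5 * eulerSeries 10 ^ 2 := by
  rw [ramanujanNum, ramanujanDen]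
  linear_combination X * (quinticSeries 1 2 * quinticSeries 3 2) ^ 2 *
      quinticSeries_mul_quinticSeries +
    X * eulerSeries 1 * eulerSeries 5 * (quinticSeries 1 2 * quinticSeries 3 2 +
      eulerSeries 2 * eulerSeries 10) * quinticSeries_two_mul_quinticSeries_two

theorem ramanujanDen_sq_sub_ramanujanNum_sq :
    (ramanujanDen ^ 2 - ramanujanNum ^ 2) * eulerSeries 10 ^ 3 =
      eulerSeries 2 ^ 3 * eulerSeries 5 ^ 6 := by
  have hN := hasQExpansion_quinticSeries_one (j := 1) (by norm_num) (by norm_num)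
  have hM := hasQExpansion_quinticSeries_one (j := 3) (by norm_num) (by norm_num)
  have hN2 := hasQExpansion_quinticSeries (j := 1) (by norm_num) (by norm_num) 2
  have hM2 := hasQExpansion_quinticSeries (j := 3) (by norm_num) (by norm_num) 2
  refine ((((hM.mul (hM2.pow 2)).pow 2).sub
    (((HasQExpansion.X.mul hN).mul (hN2.pow 2)).pow 2)).mul
    ((hasQExpansion_eulerSeries 10).pow 3)).unique
    ((((hasQExpansion_eulerSeries 2).pow 3).mul ((hasQExpansion_eulerSeries 5).pow 6)).congr
    fun z hz hz1 => ?_)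
  simpa using (alternatingTheta_five_sq_sub_sq hz hz1).symm

theorem five_mul_ramanujan_wronskian :
    5 * (ramanujanDen * eulerDerivation ℤ ramanujanNum -
      ramanujanNum * eulerDerivation ℤ ramanujanDen) =
    X * eulerSeries 1 * eulerSeries 2 ^ 2 * eulerSeries 10 *
      (eulerSeries 1 ^ 5 * eulerSeries 10 + 4 * eulerSeries 2 ^ 5 * eulerSeries 5) := by
  have h := quinticSeries_wronskian
  have h2 := quinticSeries_two_wronskian
  have hprod := quinticSeries_mul_quinticSeries
  have hprod2 := quinticSeries_two_mul_quinticSeries_two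
  simp only [ramanujanNum, ramanujanDen, Derivation.leibniz, Derivation.leibniz_pow,
    eulerDerivation_X, smul_eq_mul, nsmul_eq_mul]
  push_cast
  linear_combination X * (quinticSeries 1 2 * quinticSeries 3 2) ^ 2 * h +
    2 * X * (quinticSeries 1 1 * quinticSeries 3 1) * (quinticSeries 1 2 * quinticSeries 3 2) * h2 +
    4 * X * (quinticSeries 1 2 * quinticSeries 3 2) * eulerSeries 2 ^ 6 * hprod +
    X * (eulerSeries 1 ^ 6 * (quinticSeries 1 2 * quinticSeries 3 2 +
      eulerSeries 2 * eulerSeries 10) + 4 * eulerSeries 1 * eulerSeries 5 * eulerSeries 2 ^ 6) *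
      hprod2

theorem eulerSeries_ten_mul_add :
    eulerSeries 10 * (eulerSeries 1 ^ 5 * eulerSeries 10 + 4 * eulerSeries 2 ^ 5 * eulerSeries 5) =
      5 * eulerSeries 1 * eulerSeries 2 ^ 2 * eulerSeries 5 ^ 4 := by
  have hB := eulerSeries_pow_four_mul_eq_sub
  have hA := eulerSeries_two_pow_four_mul_eq_add
  rw [map_ofNat] at hB
  refine mul_left_cancel₀ (eulerSeries_ne_zero 5) ?_
  linear_combination eulerSeries 1 * hB + 4 * eulerSeries 2 * hA

theorem ramanujan_wronskian :
    ramanujanDen * eulerDerivation ℤ ramanujanNum - ramanujanNum * eulerDerivation ℤ ramanujanDen =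
      X * eulerSeries 1 ^ 2 * eulerSeries 2 ^ 4 * eulerSeries 5 ^ 4 := by
  have h5 : C (5 : ℤ) ≠ 0 := (map_ne_zero_iff C C_injective).mpr (by norm_num)
  refine mul_left_cancel₀ h5 ?_
  rw [map_ofNat]
  linear_combination five_mul_ramanujan_wronskian +
    X * eulerSeries 1 * eulerSeries 2 ^ 2 * eulerSeries_ten_mul_add

theorem ramanujanDen_sq_sub_four_mul_sub :
    (ramanujanDen ^ 2 - 4 * ramanujanNum * ramanujanDen - ramanujanNum ^ 2) * eulerSeries 10 =
      eulerSeries 1 ^ 4 * eulerSeries 2 * eulerSeries 5 ^ 2 := by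
  have hB := eulerSeries_pow_four_mul_eq_sub
  rw [map_ofNat] at hB
  refine mul_left_cancel₀ (pow_ne_zero 2 (eulerSeries_ne_zero 10)) ?_
  linear_combination ramanujanDen_sq_sub_ramanujanNum_sq - 4 * eulerSeries 10 ^ 3 *
    ramanujanNum_mul_ramanujanDen - eulerSeries 2 * eulerSeries 5 * hB

theorem ramanujanDen_sq_add_mul_sub :
    (ramanujanDen ^ 2 + ramanujanNum * ramanujanDen - ramanujanNum ^ 2) *
      (eulerSeries 1 * eulerSeries 10 ^ 2) = eulerSeries 2 ^ 6 * eulerSeries 5 ^ 3 := by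
  refine mul_left_cancel₀ (eulerSeries_ne_zero 10) ?_
  linear_combination eulerSeries 1 * ramanujanDen_sq_sub_ramanujanNum_sq + eulerSeries 1 *
    eulerSeries 10 ^ 3 * ramanujanNum_mul_ramanujanDen -
    eulerSeries 2 ^ 2 * eulerSeries 5 * eulerSeries_two_pow_four_mul_eq_add

theorem constantCoeff_ramanujanDen_sq_sub_four_mul_sub :
    constantCoeff (ramanujanDen ^ 2 - 4 * ramanujanNum * ramanujanDen - ramanujanNum ^ 2) = 1 := by
  simp [ramanujanNum, ramanujanDen, constantCoeff_quinticSeries]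

/-- The power series of `(2k + k²) / (1 - 4k - k²)` in Ramanujan's parameter `k`. -/
noncomputable def primitiveSeries : ℤ⟦X⟧ :=
  (2 * ramanujanNum * ramanujanDen + ramanujanNum ^ 2) *
    invOfUnit (ramanujanDen ^ 2 - 4 * ramanujanNum * ramanujanDen - ramanujanNum ^ 2) 1

theorem primitiveSeries_mul :
    primitiveSeries * (ramanujanDen ^ 2 - 4 * ramanujanNum * ramanujanDen - ramanujanNum ^ 2) =
      2 * ramanujanNum * ramanujanDen + ramanujanNum ^ 2 := by
  rw [primitiveSeries, mul_assoc, invOfUnit_mul _ _ constantCoeff_ramanujanDen_sq_sub_four_mul_sub,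
    mul_one]

theorem eulerDerivation_primitiveSeries_mul :
    eulerDerivation ℤ primitiveSeries * eulerSeries 1 ^ 7 =
      2 * X * eulerSeries 2 ^ 8 * eulerSeries 5 ^ 3 := by
  have h := derivation_mul_sq_of_mul_eq (eulerDerivation ℤ) primitiveSeries_mul
  rw [ramanujan_wronskian] at h
  have hH := ramanujanDen_sq_sub_four_mul_sub
  have hK := ramanujanDen_sq_add_mul_sub
  have hne : eulerSeries 1 ^ 2 * eulerSeries 2 ^ 2 * eulerSeries 5 ^ 4 ≠ 0 := by
    simp [eulerSeries_ne_zero]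
  set H := ramanujanDen ^ 2 - 4 * ramanujanNum * ramanujanDen - ramanujanNum ^ 2
  refine mul_left_cancel₀ hne ?_
  linear_combination eulerSeries 1 * eulerSeries 10 ^ 2 * h -
    eulerDerivation ℤ primitiveSeries * eulerSeries 1 *
      (H * eulerSeries 10 + eulerSeries 1 ^ 4 * eulerSeries 2 * eulerSeries 5 ^ 2) * hH +
    2 * X * eulerSeries 1 ^ 2 * eulerSeries 2 ^ 4 * eulerSeries 5 ^ 4 * hK

theorem hasQExpansion_eulerDerivation_primitiveSeries :
    HasQExpansion (fun z => 2 * z * eulerProduct (z ^ 2) ^ 8 * eulerProduct (z ^ 5) ^ 3 /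
      eulerProduct z ^ 7) (eulerDerivation ℤ primitiveSeries) := by
  have hnum := (((HasQExpansion.const (2 : ℤ)).mul .X).mul
    ((hasQExpansion_eulerSeries 2).pow 8)).mul ((hasQExpansion_eulerSeries 5).pow 3)
  have hne (z : ℂ) (hz1 : ‖z‖ < 1) : eulerProduct z ^ 7 ≠ 0 :=
    pow_ne_zero 7 (qPochhammerInf_ne_zero hz1 hz1)
  refine (hnum.div (hasQExpansion_eulerSeries_one.pow 7) (fun z _ => hne z) ?_ ?_).congr
    fun z _ _ => ?_
  · simp [constantCoeff_eulerSeries]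
  · rw [map_ofNat, eulerDerivation_primitiveSeries_mul]
  · simp

theorem X_pow_five_dvd_eulerSeries_one_sub :
    (X : ℤ⟦X⟧) ^ 5 ∣ eulerSeries 1 - (1 - X - X ^ 2) := by
  refine X_pow_dvd_iff.mpr fun n hn => ?_
  simp only [eulerSeries, expand_one_apply, map_sub, coeff_thetaSeries, coeff_one, coeff_X,
    coeff_X_pow]
  interval_cases n <;> decide

theorem X_pow_five_dvd_eulerSeries_two_sub :
    (X : ℤ⟦X⟧) ^ 5 ∣ eulerSeries 2 - (1 - X ^ 2 - X ^ 4) := by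
  refine X_pow_dvd_iff.mpr fun n hn => ?_
  simp only [eulerSeries, coeff_expand, map_sub, coeff_thetaSeries, coeff_one, coeff_X_pow]
  interval_cases n <;> decide

theorem X_pow_five_dvd_eulerSeries_five_sub : (X : ℤ⟦X⟧) ^ 5 ∣ eulerSeries 5 - 1 := by
  refine X_pow_dvd_iff.mpr fun n hn => ?_
  obtain rfl | hn0 := eq_or_ne n 0
  · simp [constantCoeff_eulerSeries]
  · have h5 : ¬5 ∣ n := fun h => hn.not_ge (Nat.le_of_dvd (Nat.pos_of_ne_zero hn0) h)
    rw [map_sub, eulerSeries, coeff_expand_of_not_dvd _ _ _ h5, coeff_one, if_neg hn0, sub_zero]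

theorem mul_pow_seven_eq_of_pow_five_eq_zero {R : Type*} [CommRing R] {x : R} (hx : x ^ 5 = 0) :
    (2 * x + 14 * x ^ 2 + 54 * x ^ 3 + 168 * x ^ 4) * (1 - x - x ^ 2) ^ 7 =
      2 * x * (1 - x ^ 2 - x ^ 4) ^ 8 := by
  have hpow (n : ℕ) (hn : 5 ≤ n) : x ^ n = 0 := pow_eq_zero_of_le hn hx
  ring_nf
  simp [hpow]

theorem X_pow_five_dvd_eulerDerivation_primitiveSeries_sub :
    (X : ℤ⟦X⟧) ^ 5 ∣ eulerDerivation ℤ primitiveSeries -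
      (2 * X + 14 * X ^ 2 + 54 * X ^ 3 + 168 * X ^ 4) := by
  have hunit : IsUnit (eulerSeries 1 ^ 7) := by
    simp [isUnit_iff_constantCoeff, constantCoeff_eulerSeries]
  have hmod (A B : ℤ⟦X⟧) : X ^ 5 ∣ A - B ↔
      Ideal.Quotient.mk (Ideal.span {X ^ 5}) A = Ideal.Quotient.mk (Ideal.span {X ^ 5}) B := by
    rw [Ideal.Quotient.mk_eq_mk_iff_sub_mem, Ideal.mem_span_singleton]
  have h1 := (hmod _ _).mp X_pow_five_dvd_eulerSeries_one_sub
  have h2 := (hmod _ _).mp X_pow_five_dvd_eulerSeries_two_sub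
  have h5 := (hmod _ _).mp X_pow_five_dvd_eulerSeries_five_sub
  have hX := (hmod (X ^ 5) 0).mp (by rw [sub_zero])
  rw [← hunit.dvd_mul_right, sub_mul, eulerDerivation_primitiveSeries_mul, hmod]
  simp only [map_mul, map_add, map_sub, map_pow, map_one, map_zero, map_ofNat] at h1 h2 h5 hX ⊢
  rw [h1, h2, h5, one_pow, mul_one, mul_pow_seven_eq_of_pow_five_eq_zero hX]

theorem coeff_primitiveSeries :
    coeff 1 primitiveSeries = 2 ∧ coeff 2 primitiveSeries = 7 ∧
      coeff 3 primitiveSeries = 18 ∧ coeff 4 primitiveSeries = 42 := by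
  have h := X_pow_dvd_iff.mp X_pow_five_dvd_eulerDerivation_primitiveSeries_sub
  have hT : (2 * X + 14 * X ^ 2 + 54 * X ^ 3 + 168 * X ^ 4 : ℤ⟦X⟧) =
      C 2 * X + C 14 * X ^ 2 + C 54 * X ^ 3 + C 168 * X ^ 4 := by simp only [map_ofNat]
  simp only [hT, map_sub, map_add, coeff_eulerDerivation, coeff_C_mul, coeff_X, coeff_X_pow] at h
  have h1 := h 1 (by norm_num)
  have h2 := h 2 (by norm_num)
  have h3 := h 3 (by norm_num)
  have h4 := h 4 (by norm_num)
  norm_num at h1 h2 h3 h4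
  omega

end LevelTenSeries

theorem ofReal_eulerE (q : ℝ) : (eulerE q : ℂ) = eulerProduct (q : ℂ) := by
  have h := Function.LeftInverse.map_tprod (fun j : ℕ => 1 - q ^ (j + 1))
    (L := .unconditional ℕ) (g := Complex.ofRealHom) Complex.continuous_ofReal
    Complex.continuous_re Complex.ofReal_re
  simpa [eulerE, eulerProduct, qPochhammerInf, pow_succ'] using h

theorem hasSum_primitiveSeries {q : ℝ} (hq : 0 < q) (hq1 : q < 1) :
    HasSum (fun n : ℕ => (n : ℝ) * (primitiveSeries.coeff n : ℝ) * q ^ n)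
      (2 * q * eulerE (q ^ 2) ^ 8 * eulerE (q ^ 5) ^ 3 / eulerE q ^ 7) := by
  rw [← Complex.hasSum_ofReal]
  convert hasQExpansion_eulerDerivation_primitiveSeries q (mod_cast hq.ne')
    (by simpa [abs_of_pos hq] using hq1) using 1
  · simp [coeff_eulerDerivation]
  · simp [ofReal_eulerE]

theorem stmt_10 :
    ∃ d : ℕ → ℤ,
      (∀ q : ℝ, 0 < q → q < 1 →
        Summable (fun n : ℕ => |(n : ℝ) * (d n : ℝ) * q ^ n|) ∧
        2 * q * eulerE (q ^ 2) ^ 8 * eulerE (q ^ 5) ^ 3 / eulerE q ^ 7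
          = ∑' n : ℕ, (n : ℝ) * (d n : ℝ) * q ^ n) ∧
      d 1 = 2 ∧ d 2 = 7 ∧ d 3 = 18 ∧ d 4 = 42 := by
  refine ⟨fun n => primitiveSeries.coeff n, fun q hq hq1 => ?_, coeff_primitiveSeries⟩
  have hsum := hasSum_primitiveSeries hq hq1
  exact ⟨hsum.summable.abs, hsum.tsum_eq.symm⟩
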